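/- arXiv:2104.07729 — 2 statements merged into one kernel-verified Lean document; each statement's English description precedes it below -/
import Mathlib

section
/- For every k with k = 7 or k ≥ 9 and all sufficiently large n, no n-vertex W_{2k+1}-free simple graph attaining the maximum spectral radius among all n-vertex W_{2k+1}-free graphs attains the maximum number of edges among all n-vertex W_{2k+1}-free graphs; that is, SPEX(n, W_{2k+1}) ∩ EX(n, W_{2k+1}) = ∅. -/
/-- The wheel graph on `t` vertices: vertex `0` joined to every vertex of the
cycle `1, 2, …, t-1` (with `t-1` adjacent to `1`). -/
def wheelGraph (t : ℕ) : SimpleGraph (Fin t) where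
  Adj a b := a ≠ b ∧ (a.val = 0 ∨ b.val = 0 ∨ a.val + 1 = b.val ∨ b.val + 1 = a.val ∨
      (a.val = 1 ∧ b.val = t - 1) ∨ (b.val = 1 ∧ a.val = t - 1))
  symm := by
    constructor
    intro a b h
    exact ⟨h.1.symm, by tauto⟩
  loopless := by
    constructor
    intro a h
    exact h.1 rfl

/-- `G` contains a copy of `F`, i.e. a subgraph isomorphic to `F`. -/
def ContainsCopy {α β : Type*} (F : SimpleGraph α) (G : SimpleGraph β) : Prop :=
  ∃ f : α ↪ β, ∀ a b, F.Adj a b → G.Adj (f a) (f b)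

/-- `G` is `W_t`-free: it contains no subgraph isomorphic to the wheel on `t` vertices. -/
def WheelFree (t : ℕ) {n : ℕ} (G : SimpleGraph (Fin n)) : Prop :=
  ¬ ContainsCopy (wheelGraph t) G

/-- The spectral radius of `G`: the largest eigenvalue of its adjacency matrix. -/
noncomputable def lam1 {n : ℕ} (G : SimpleGraph (Fin n)) : ℝ := by
  classical
  exact sSup {μ : ℝ | Module.End.HasEigenvalue (Matrix.toLin' (G.adjMatrix ℝ)) μ}

/-- The number of edges of a graph on a finite vertex type. -/
noncomputable def edgeCount {V : Type*} [Fintype V] (G : SimpleGraph V) : ℕ := by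
  classical
  exact G.edgeFinset.card

/-- The degree of a vertex. -/
noncomputable def deg {n : ℕ} (G : SimpleGraph (Fin n)) (v : Fin n) : ℕ := by
  classical
  exact G.degree v

/-- The number of neighbours of `v` inside the set `A`. -/
noncomputable def degIn {n : ℕ} (G : SimpleGraph (Fin n)) (A : Finset (Fin n)) (v : Fin n) : ℕ := by
  classical
  exact (A.filter fun u => G.Adj v u).card

/-- The number of edges of `G` with one endpoint in `S` and the other outside `S`. -/
noncomputable def cutCount {n : ℕ} (G : SimpleGraph (Fin n)) (S : Finset (Fin n)) : ℕ := by
  classical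
  exact ((Finset.univ : Finset (Fin n × Fin n)).filter
    fun p => G.Adj p.1 p.2 ∧ p.1 ∈ S ∧ p.2 ∉ S).card

/-- `(S, T)` is a maximum cut of `G`. -/
def IsMaxCut {n : ℕ} (G : SimpleGraph (Fin n)) (S T : Finset (Fin n)) : Prop :=
  T = Sᶜ ∧ ∀ S' : Finset (Fin n), cutCount G S' ≤ cutCount G S

/-- `G` attains the maximum spectral radius among all `n`-vertex `W_t`-free graphs. -/
def IsSpexWheel (t : ℕ) {n : ℕ} (G : SimpleGraph (Fin n)) : Prop :=
  WheelFree t G ∧ ∀ H : SimpleGraph (Fin n), WheelFree t H → lam1 H ≤ lam1 G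

/-- `G` attains the maximum number of edges among all `n`-vertex `W_t`-free graphs. -/
def IsExWheel (t : ℕ) {n : ℕ} (G : SimpleGraph (Fin n)) : Prop :=
  WheelFree t G ∧ ∀ H : SimpleGraph (Fin n), WheelFree t H → edgeCount H ≤ edgeCount G

/-!
For large `n`, an edge-extremal `W_{2k+1}`-free graph is, up to boundedly many defects, the join of
a nearly `(k - 1)`-regular graph on a set `S` of `a` vertices and a graph with at most one edge on
the remaining `b` vertices; a clean graph of this kind exists whenever `a ≈ n / 2` is even or `k` is
odd. Its number of edges is `a b + (k - 1) a / 2 + 1`, so with `p = a - b` the edge maximizer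
maximizes `p (k - 1 - p)`, that is, `p` is close to `(k - 1) / 2`. The spectral radius `λ`, however,
satisfies `λ ^ 2 - (k - 1) λ = 2 e(G) - (k - 1) a - a b + o(1)`, which is `a b + 2 + o(1)` for the
clean graphs and at most that in general. As `a b` is an integer, a spectral maximizer maximizes
`a b`, that is, `|p|` is as small as parity permits. For `k = 7` and `k ≥ 9` no `p` does both.
-/

namespace OddWheel

open Finset

section Wheels

variable {V : Type*} {G : SimpleGraph V}

lemma containsCopy_wheelGraph_of_cycle {h : V} {l : List V} (hnd : l.Nodup)
    (hch : l.IsChain G.Adj) (hcl : ∀ x ∈ l.getLast?, ∀ y ∈ l.head?, G.Adj x y)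
    (hh : ∀ x ∈ l, G.Adj h x) : ContainsCopy (wheelGraph (l.length + 1)) G := by
  have hsucc : ∀ i j : Fin l.length, (i : ℕ) + 1 = j → G.Adj (l.get i) (l.get j) := by
    rintro ⟨i, hi⟩ ⟨j, hj⟩ rfl
    exact List.isChain_iff_getElem.1 hch i hj
  have hclose : ∀ i j : Fin l.length, (i : ℕ) + 1 = l.length → (j : ℕ) = 0 →
      G.Adj (l.get i) (l.get j) := by
    rintro ⟨i, hi⟩ ⟨j, hj⟩ (hil : i + 1 = l.length) rfl
    obtain rfl : i = l.length - 1 := by omega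
    exact hcl _ (by simp [List.getLast?_eq_getElem?]) _ (by simp [List.head?_eq_getElem?])
  have hinj : Function.Injective (Fin.cons h l.get : Fin (l.length + 1) → V) := by
    rw [Fin.cons_injective_iff, Set.range_list_get]
    exact ⟨fun hm => G.loopless.irrefl h (hh h hm), List.nodup_iff_injective_get.1 hnd⟩
  refine ⟨⟨Fin.cons h l.get, hinj⟩, fun a b hab => ?_⟩
  induction a using Fin.cases <;> induction b using Fin.cases
  case zero.zero => exact absurd rfl hab.1
  case zero.succ j => exact hh _ (l.get_mem j)
  case succ.zero i => exact (hh _ (l.get_mem i)).symm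
  case succ.succ i j =>
    obtain ⟨-, hab⟩ := hab
    simp only [Fin.val_succ] at hab
    change G.Adj (l.get i) (l.get j)
    rcases hab with h0 | h0 | hij | hji | hij | hji
    · omega
    · omega
    · exact hsucc i j (by omega)
    · exact (hsucc j i (by omega)).symm
    · exact (hclose j i (by omega) (by omega)).symm
    · exact hclose i j (by omega) (by omega)

/-- The list `P` is a linear forest of `G`: its members are the vertex sequences of pairwise
disjoint nonempty paths. -/
structure IsLinearForest (G : SimpleGraph V) (P : List (List V)) : Prop where
  nodup : P.flatten.Nodup
  ne_nil : ∀ p ∈ P, p ≠ []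
  isChain : ∀ p ∈ P, p.IsChain G.Adj

/-- The sequence `u₁ p₁ u₂ p₂ …`: the rim of a wheel, assembled from single vertices `uᵢ` on one
side of a bipartition and paths `pᵢ` on the other. -/
def interleave : List V → List (List V) → List V
  | u :: U, p :: P => (u :: p) ++ interleave U P
  | _, _ => []

lemma interleave_perm : ∀ {U : List V} {P : List (List V)}, U.length = P.length →
    (interleave U P).Perm (U ++ P.flatten)
  | [], [], _ => by simp [interleave]
  | u :: U, p :: P, h => by
    have ih : (interleave U P).Perm (U ++ P.flatten) := interleave_perm (by simpa using h)
    simp only [interleave, List.flatten_cons, List.cons_append, List.perm_cons]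
    refine (ih.append_left p).trans ?_
    rw [← List.append_assoc, ← List.append_assoc]
    exact List.perm_append_comm.append_right _

lemma mem_of_mem_head?_interleave {U : List V} {P : List (List V)} {x : V}
    (hx : x ∈ (interleave U P).head?) : x ∈ U := by
  rcases U with _ | ⟨u, U⟩ <;> rcases P with _ | ⟨p, P⟩ <;> simp_all [interleave]

lemma mem_of_mem_getLast?_cons {u x : V} {p : List V} (hp : p ≠ [])
    (hx : x ∈ (u :: p).getLast?) : x ∈ p := by
  obtain ⟨y, q, rfl⟩ := List.exists_cons_of_ne_nil hp
  rw [List.getLast?_cons_cons] at hx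
  exact List.mem_of_mem_getLast? hx

lemma mem_flatten_of_mem_getLast?_interleave : ∀ {U : List V} {P : List (List V)},
    (∀ p ∈ P, p ≠ []) → ∀ {x : V}, x ∈ (interleave U P).getLast? → x ∈ P.flatten
  | [], _, _, _, hx => by simp [interleave] at hx
  | _ :: _, [], _, _, hx => by simp [interleave] at hx
  | u :: U, p :: P, hP, x, hx => by
    rw [interleave, List.getLast?_append, Option.mem_def, Option.or_eq_some_iff] at hx
    rw [List.flatten_cons, List.mem_append]
    rcases hx with hx | ⟨-, hx⟩
    · exact .inr (mem_flatten_of_mem_getLast?_interleave (fun q hq => hP q (by simp [hq])) hx)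
    · exact .inl (mem_of_mem_getLast?_cons (hP p (by simp)) hx)

lemma isChain_interleave : ∀ {U : List V} {P : List (List V)}, (∀ p ∈ P, p ≠ []) →
    (∀ p ∈ P, p.IsChain G.Adj) → (∀ u ∈ U, ∀ x ∈ P.flatten, G.Adj u x) →
    (interleave U P).IsChain G.Adj
  | [], _, _, _, _ => by simp [interleave]
  | _ :: _, [], _, _, _ => by simp [interleave]
  | u :: U, p :: P, hne, hch, hU => by
    have hup : ∀ v ∈ u :: U, ∀ x ∈ p, G.Adj v x := fun v hv x hx => hU v hv x (by simp [hx])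
    rw [interleave, List.isChain_append, List.isChain_cons]
    refine ⟨⟨fun y hy => hup u (by simp) y (List.mem_of_mem_head? hy), hch p (by simp)⟩, ?_, ?_⟩
    · exact isChain_interleave (fun q hq => hne q (by simp [hq]))
        (fun q hq => hch q (by simp [hq]))
        (fun v hv x hx => hU v (by simp [hv]) x (by
          rw [List.flatten_cons, List.mem_append]; exact .inr hx))
    · exact fun x hx y hy => (hup y (by simp [mem_of_mem_head?_interleave hy]) x
        (mem_of_mem_getLast?_cons (hne p (by simp)) hx)).symm

lemma containsCopy_wheelGraph_of_isLinearForest {h : V} {U : List V} {P : List (List V)}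
    (hP : IsLinearForest G P) (hU : U.Nodup) (hUP : U.length = P.length)
    (hadj : ∀ u ∈ U, ∀ x ∈ P.flatten, G.Adj u x) (hhU : ∀ u ∈ U, G.Adj h u)
    (hhP : ∀ x ∈ P.flatten, G.Adj h x) :
    ContainsCopy (wheelGraph (U.length + P.flatten.length + 1)) G := by
  have hperm := interleave_perm hUP
  rw [← List.length_append, ← hperm.length_eq]
  refine containsCopy_wheelGraph_of_cycle (h := h) ?_ (isChain_interleave hP.ne_nil hP.isChain hadj)
    (fun x hx y hy => (hadj _ (mem_of_mem_head?_interleave hy) _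
      (mem_flatten_of_mem_getLast?_interleave hP.ne_nil hx)).symm) ?_
  · rw [hperm.nodup_iff, List.nodup_append]
    refine ⟨hU, hP.nodup, ?_⟩
    rintro a haU b haP rfl
    exact (hadj a haU a haP).ne rfl
  · intro x hx
    rw [hperm.mem_iff, List.mem_append] at hx
    exact hx.elim (hhU x) (hhP x)

/-- In `G`, the set `T` contains an `r`-vertex path avoiding any prescribed set of at most `f`
vertices, so that paths can be picked greedily. -/
def HasRobustPaths (G : SimpleGraph V) (T : Finset V) (f r : ℕ) : Prop :=
  ∀ F : Finset V, #F ≤ f → ∃ p : List V, p.length = r ∧ p.Nodup ∧ p.IsChain G.Adj ∧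
    (∀ x ∈ p, x ∈ T) ∧ ∀ x ∈ p, x ∉ F

lemma exists_isLinearForest_of_hasRobustPaths {T : Finset V} {f : ℕ} :
    ∀ (R : List ℕ), (∀ r ∈ R, 0 < r) → (∀ r ∈ R, HasRobustPaths G T f r) →
      ∀ F : Finset V, #F + R.sum ≤ f → ∃ P : List (List V), IsLinearForest G P ∧
        P.length = R.length ∧ P.flatten.length = R.sum ∧ (∀ x ∈ P.flatten, x ∈ T) ∧
        ∀ x ∈ P.flatten, x ∉ F
  | [], _, _, F, _ => ⟨[], ⟨by simp, by simp, by simp⟩, by simp⟩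
  | r :: R, hpos, hR, F, hF => by
    classical
    rw [List.sum_cons] at hF
    obtain ⟨p, hlen, hnd, hch, hpT, hpF⟩ := hR r (by simp) F (by omega)
    have hcard : #(F ∪ p.toFinset) ≤ #F + r :=
      (card_union_le _ _).trans (by have := p.toFinset_card_le; omega)
    obtain ⟨P, hP, hPR, hsum, hPT, hPF⟩ := exists_isLinearForest_of_hasRobustPaths R
      (fun s hs => hpos s (by simp [hs])) (fun s hs => hR s (by simp [hs])) (F ∪ p.toFinset)
      (by omega)
    simp only [mem_union, List.mem_toFinset, not_or] at hPF
    have hp : p ≠ [] := List.ne_nil_of_length_pos (hlen ▸ hpos r (by simp))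
    refine ⟨p :: P, ⟨?_, ?_, ?_⟩, by simp [hPR], by simp [hsum, hlen], ?_, ?_⟩
    · rw [List.flatten_cons, List.nodup_append]
      refine ⟨hnd, hP.nodup, ?_⟩
      rintro x hxp y hy rfl
      exact (hPF x hy).2 hxp
    · exact List.forall_mem_cons.2 ⟨hp, hP.ne_nil⟩
    · exact List.forall_mem_cons.2 ⟨hch, hP.isChain⟩
    · rw [List.flatten_cons, List.forall_mem_append]
      exact ⟨hpT, hPT⟩
    · rw [List.flatten_cons, List.forall_mem_append]
      exact ⟨hpF, fun x hx => (hPF x hx).1⟩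

end Wheels

section Degrees

variable {V : Type*}

open scoped Classical in
/-- The neighbours of `v` inside `X`. -/
noncomputable def nbhdIn (G : SimpleGraph V) (X : Finset V) (v : V) : Finset V :=
  X.filter (G.Adj v)

/-- The number of neighbours of `v` inside `X`, for an arbitrary vertex type (`degIn` is the case
of `Fin n`). -/
noncomputable def degreeIn (G : SimpleGraph V) (X : Finset V) (v : V) : ℕ :=
  #(nbhdIn G X v)

open scoped Classical in
/-- The common neighbours of the vertices of `W` inside `X`. -/
noncomputable def commonNbhd (G : SimpleGraph V) (X W : Finset V) : Finset V :=
  X.filter fun x => ∀ u ∈ W, G.Adj u x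

/-- The number of nonadjacent pairs in `A × B`, as a real number. -/
noncomputable def missing (G : SimpleGraph V) (A B : Finset V) : ℝ :=
  ∑ u ∈ A, ((#B : ℝ) - degreeIn G B u)

variable {G : SimpleGraph V} {A B W X Y : Finset V} {u v : V}

@[simp]
lemma mem_nbhdIn : u ∈ nbhdIn G X v ↔ u ∈ X ∧ G.Adj v u := by simp [nbhdIn]

@[simp]
lemma mem_commonNbhd : u ∈ commonNbhd G X W ↔ u ∈ X ∧ ∀ w ∈ W, G.Adj w u := by
  simp [commonNbhd]

lemma nbhdIn_subset : nbhdIn G X v ⊆ X := fun _ hu => (mem_nbhdIn.1 hu).1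

lemma nbhdIn_mono (h : X ⊆ Y) : nbhdIn G X v ⊆ nbhdIn G Y v := fun _ hu =>
  mem_nbhdIn.2 ⟨h (mem_nbhdIn.1 hu).1, (mem_nbhdIn.1 hu).2⟩

lemma degreeIn_le_card : degreeIn G X v ≤ #X := card_le_card nbhdIn_subset

lemma cast_degreeIn_le_card : (degreeIn G X v : ℝ) ≤ #X := by exact_mod_cast degreeIn_le_card

lemma degreeIn_mono (h : X ⊆ Y) : degreeIn G X v ≤ degreeIn G Y v := card_le_card (nbhdIn_mono h)

lemma degreeIn_inter_add_sdiff [DecidableEq V] (G : SimpleGraph V) (X Y : Finset V) (v : V) :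
    degreeIn G (X ∩ Y) v + degreeIn G (X \ Y) v = degreeIn G X v := by
  have hinter : nbhdIn G (X ∩ Y) v = nbhdIn G X v ∩ Y := by ext; simp; tauto
  have hsdiff : nbhdIn G (X \ Y) v = nbhdIn G X v \ Y := by ext; simp; tauto
  rw [degreeIn, degreeIn, hinter, hsdiff, card_inter_add_card_sdiff, degreeIn]

lemma degreeIn_add_compl [Fintype V] [DecidableEq V] (G : SimpleGraph V) (S : Finset V) (v : V) :
    degreeIn G S v + degreeIn G Sᶜ v = degreeIn G univ v := by
  rw [← degreeIn_inter_add_sdiff G univ S v, univ_inter, compl_eq_univ_sdiff]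

lemma sum_degreeIn_comm (G : SimpleGraph V) (X Y : Finset V) :
    ∑ v ∈ X, degreeIn G Y v = ∑ v ∈ Y, degreeIn G X v := by
  classical
  simp only [degreeIn, nbhdIn]
  refine (sum_card_bipartiteAbove_eq_sum_card_bipartiteBelow G.Adj).trans ?_
  simp only [bipartiteBelow, G.adj_comm]

lemma degreeIn_univ_eq_degree [Fintype V] (G : SimpleGraph V) (v : V)
    [Fintype (G.neighborSet v)] : degreeIn G univ v = G.degree v := by
  rw [← G.card_neighborFinset_eq_degree, degreeIn]
  congr 1
  ext
  simp

lemma sum_degreeIn_univ [Fintype V] (G : SimpleGraph V) :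
    ∑ v, degreeIn G univ v = 2 * edgeCount G := by
  classical
  rw [edgeCount, ← G.sum_degrees_eq_twice_card_edges]
  exact sum_congr rfl fun v _ => degreeIn_univ_eq_degree G v

lemma two_mul_edgeCount [Fintype V] [DecidableEq V] (G : SimpleGraph V) (S : Finset V) :
    2 * edgeCount G =
      ∑ v ∈ S, degreeIn G S v + ∑ v ∈ Sᶜ, degreeIn G Sᶜ v + 2 * ∑ v ∈ S, degreeIn G Sᶜ v := by
  rw [← sum_degreeIn_univ, ← sum_add_sum_compl S]
  simp only [← degreeIn_add_compl G S, sum_add_distrib]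
  rw [sum_degreeIn_comm G Sᶜ S]
  ring

lemma card_le_card_commonNbhd_add (G : SimpleGraph V) (B W : Finset V) :
    #B ≤ #(commonNbhd G B W) + ∑ u ∈ W, (#B - degreeIn G B u) := by
  classical
  have hcover : B ⊆ commonNbhd G B W ∪ W.biUnion fun u => B \ nbhdIn G B u := by
    intro w hw
    by_cases h : ∀ u ∈ W, G.Adj u w
    · exact mem_union_left _ (mem_commonNbhd.2 ⟨hw, h⟩)
    · push Not at h
      obtain ⟨u, hu, huw⟩ := h
      exact mem_union_right _ (mem_biUnion.2 ⟨u, hu, by simp [hw, huw]⟩)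
  refine (card_le_card hcover).trans ((card_union_le _ _).trans ?_)
  gcongr
  refine card_biUnion_le.trans (sum_le_sum fun u _ => ?_)
  rw [card_sdiff_of_subset nbhdIn_subset, degreeIn]

lemma missing_eq_sub (G : SimpleGraph V) (A B : Finset V) :
    missing G A B = #A * #B - ∑ u ∈ A, (degreeIn G B u : ℝ) := by
  simp [missing]

lemma missing_comm (G : SimpleGraph V) (A B : Finset V) : missing G A B = missing G B A := by
  rw [missing_eq_sub, missing_eq_sub, mul_comm]
  congr 1
  exact_mod_cast sum_degreeIn_comm G A B

lemma missing_mono_left (h : X ⊆ A) : missing G X B ≤ missing G A B :=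
  sum_le_sum_of_subset_of_nonneg h fun _ _ _ => sub_nonneg.2 cast_degreeIn_le_card

lemma sub_degreeIn_le_missing (hu : u ∈ A) : (#B : ℝ) - degreeIn G B u ≤ missing G A B :=
  single_le_sum (f := fun u => (#B : ℝ) - degreeIn G B u)
    (fun _ _ => sub_nonneg.2 cast_degreeIn_le_card) hu

-- All but `missing G A B` of the pairs in `N_A(v) × N_B(v)` are edges inside `N(v)`.
lemma degreeIn_mul_degreeIn_le [Fintype V] (G : SimpleGraph V) (A B : Finset V) (v : V) :
    (degreeIn G A v : ℝ) * degreeIn G B v ≤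
      ∑ u ∈ nbhdIn G univ v, (degreeIn G (nbhdIn G univ v) u : ℝ) + missing G A B := by
  classical
  set N := nbhdIn G univ v
  have hpoint : ∀ u, (degreeIn G B v : ℝ) - (#B - degreeIn G B u) ≤ degreeIn G N u := by
    intro u
    have hmono : degreeIn G (nbhdIn G B v) u ≤ degreeIn G N u :=
      degreeIn_mono (nbhdIn_mono (subset_univ B))
    have hsplit := degreeIn_inter_add_sdiff G B (nbhdIn G B v) u
    rw [inter_eq_right.2 nbhdIn_subset] at hsplit
    have hrest : degreeIn G (B \ nbhdIn G B v) u ≤ #(B \ nbhdIn G B v) := degreeIn_le_card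
    have hcard : #(B \ nbhdIn G B v) + degreeIn G B v = #B :=
      card_sdiff_add_card_eq_card nbhdIn_subset
    have : degreeIn G B v + degreeIn G B u ≤ degreeIn G N u + #B := by omega
    have : (degreeIn G B v : ℝ) + degreeIn G B u ≤ degreeIn G N u + #B := by exact_mod_cast this
    linarith
  have hN : ∑ u ∈ nbhdIn G A v, (degreeIn G N u : ℝ) ≤ ∑ u ∈ N, (degreeIn G N u : ℝ) :=
    sum_le_sum_of_subset_of_nonneg (nbhdIn_mono (subset_univ A)) fun _ _ _ => Nat.cast_nonneg _
  calc (degreeIn G A v : ℝ) * degreeIn G B v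
      = ∑ u ∈ nbhdIn G A v, ((degreeIn G B v : ℝ) - (#B - degreeIn G B u)) +
          missing G (nbhdIn G A v) B := by
        rw [missing, ← sum_add_distrib]
        simp [degreeIn]
    _ ≤ ∑ u ∈ nbhdIn G A v, (degreeIn G N u : ℝ) + missing G A B :=
        add_le_add (sum_le_sum fun u _ => hpoint u) (missing_mono_left nbhdIn_subset)
    _ ≤ _ := by gcongr

end Degrees

section KovariSosTuran

variable {V : Type*} {G : SimpleGraph V}

lemma sum_choose_degreeIn_le {X : Finset V} {s t : ℕ}
    (h : ∀ K ⊆ X, #K = s → #(commonNbhd G X K) ≤ t) :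
    ∑ u ∈ X, (degreeIn G X u).choose s ≤ t * (#X).choose s := by
  classical
  have hchoose : ∀ u, (degreeIn G X u).choose s =
      #{K ∈ X.powersetCard s | ∀ w ∈ K, G.Adj u w} := by
    intro u
    rw [degreeIn, ← card_powersetCard]
    congr 1
    ext K
    simp only [mem_powersetCard, mem_filter, subset_iff, mem_nbhdIn]
    grind
  calc ∑ u ∈ X, (degreeIn G X u).choose s
      = ∑ K ∈ X.powersetCard s, #{u ∈ X | ∀ w ∈ K, G.Adj u w} := by
        simp only [hchoose]
        exact sum_card_bipartiteAbove_eq_sum_card_bipartiteBelow fun u K => ∀ w ∈ K, G.Adj u w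
    _ ≤ ∑ _K ∈ X.powersetCard s, t := by
        refine sum_le_sum fun K hK => ?_
        rw [mem_powersetCard] at hK
        have heq : {u ∈ X | ∀ w ∈ K, G.Adj u w} = commonNbhd G X K := by
          ext u
          simp [G.adj_comm]
        exact heq ▸ h K hK.1 hK.2
    _ = t * (#X).choose s := by simp [mul_comm]

lemma pow_sum_degreeIn_le {X : Finset V} {s t : ℕ} (hs : s ≠ 0)
    (h : ∀ K ⊆ X, #K = s → #(commonNbhd G X K) ≤ t) :
    (∑ u ∈ X, (degreeIn G X u + 1 - s)) ^ s ≤ #X ^ (s - 1) * (s.factorial * (t * #X ^ s)) := by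
  calc (∑ u ∈ X, (degreeIn G X u + 1 - s)) ^ s
      ≤ #X ^ (s - 1) * ∑ u ∈ X, (degreeIn G X u + 1 - s) ^ s := by
        obtain ⟨m, rfl⟩ := Nat.exists_eq_succ_of_ne_zero hs
        exact pow_sum_le_card_mul_sum_pow (fun _ _ => Nat.zero_le _) m
    _ ≤ #X ^ (s - 1) * (s.factorial * ∑ u ∈ X, (degreeIn G X u).choose s) := by
        gcongr
        rw [mul_sum]
        refine sum_le_sum fun u _ => ?_
        rw [← Nat.descFactorial_eq_factorial_mul_choose]
        exact Nat.pow_sub_le_descFactorial _ _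
    _ ≤ #X ^ (s - 1) * (s.factorial * (t * #X ^ s)) := by
        gcongr
        exact (sum_choose_degreeIn_le h).trans (by gcongr; exact Nat.choose_le_pow _ _)

lemma exists_sum_degreeIn_le_mul_sq {s : ℕ} (hs : s ≠ 0) (t : ℕ) {γ : ℝ} (hγ : 0 < γ) :
    ∃ N : ℕ, ∀ n ≥ N, ∀ {V : Type*} (G : SimpleGraph V) (X : Finset V), #X ≤ n →
      (∀ K ⊆ X, #K = s → #(commonNbhd G X K) ≤ t) →
      ∑ u ∈ X, (degreeIn G X u : ℝ) ≤ γ * n ^ 2 := by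
  obtain ⟨N₁, hN₁⟩ := exists_nat_gt (2 * s / γ)
  obtain ⟨N₂, hN₂⟩ := exists_nat_gt (((s.factorial * t : ℕ) : ℝ) / (γ / 2) ^ s)
  refine ⟨max (max N₁ N₂) 1, fun n hn V G X hX h => ?_⟩
  by_contra! hcon
  have hn₀ : (0 : ℝ) < n := by exact_mod_cast (by omega : 0 < n)
  have hn₁ : (2 * s : ℝ) < γ * n := by
    have : 2 * s / γ < n := hN₁.trans_le (by exact_mod_cast (by omega : N₁ ≤ n))
    rwa [div_lt_iff₀' hγ] at this
  have hn₂ : ((s.factorial * t : ℕ) : ℝ) < (γ / 2) ^ s * n := by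
    have : ((s.factorial * t : ℕ) : ℝ) / (γ / 2) ^ s < n :=
      hN₂.trans_le (by exact_mod_cast (by omega : N₂ ≤ n))
    rwa [div_lt_iff₀' (by positivity)] at this
  have hshift : γ / 2 * (n : ℝ) ^ 2 ≤ ((∑ u ∈ X, (degreeIn G X u + 1 - s) : ℕ) : ℝ) := by
    have hnat : ∑ u ∈ X, degreeIn G X u ≤ ∑ u ∈ X, (degreeIn G X u + 1 - s) + #X * s := by
      rw [← smul_eq_mul, ← sum_const, ← sum_add_distrib]
      exact sum_le_sum fun u _ => by omega
    have hreal : ∑ u ∈ X, (degreeIn G X u : ℝ) ≤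
        ((∑ u ∈ X, (degreeIn G X u + 1 - s) : ℕ) : ℝ) + #X * s := by exact_mod_cast hnat
    have hXs : (#X : ℝ) * s ≤ n * s := by gcongr
    nlinarith
  have hkst : (γ / 2 * (n : ℝ) ^ 2) ^ s ≤ (n : ℝ) ^ (s - 1) * (s.factorial * (t * (n : ℝ) ^ s)) :=
    (pow_le_pow_left₀ (by positivity) hshift s).trans (by
      exact_mod_cast (pow_sum_degreeIn_le hs h).trans (by gcongr))
  obtain ⟨m, rfl⟩ := Nat.exists_eq_succ_of_ne_zero hs
  have hlhs : (γ / 2 * (n : ℝ) ^ 2) ^ m.succ =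
      ((γ / 2) ^ m.succ * n) * ((n : ℝ) ^ m * (n : ℝ) ^ m.succ) := by
    rw [mul_pow, Nat.succ_eq_add_one]
    ring
  have hpos : (0 : ℝ) < (n : ℝ) ^ m * (n : ℝ) ^ m.succ := by positivity
  rw [hlhs, Nat.succ_sub_one] at hkst
  push_cast at hn₂
  nlinarith [mul_lt_mul_of_pos_right hn₂ hpos]

lemma flatten_map_singleton {α : Type*} (l : List α) : (l.map fun x => [x]).flatten = l := by
  induction l with
  | nil => rfl
  | cons a l ih => simp [ih]

lemma containsCopy_wheelGraph_of_complete {h : V} {A B : Finset V} (hAB : #A ≤ #B)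
    (hhA : ∀ a ∈ A, G.Adj h a) (hhB : ∀ b ∈ B, G.Adj h b) (hadj : ∀ a ∈ A, ∀ b ∈ B, G.Adj a b) :
    ContainsCopy (wheelGraph (2 * #A + 1)) G := by
  obtain ⟨B', hB', hcard⟩ := exists_subset_card_eq hAB
  have hforest : IsLinearForest G (B'.toList.map fun x => [x]) :=
    ⟨by rw [flatten_map_singleton]; exact nodup_toList _, by simp, by simp⟩
  have := containsCopy_wheelGraph_of_isLinearForest (h := h) hforest A.nodup_toList
    (by simp [hcard])
    (by simpa [flatten_map_singleton] using fun a ha b hb => hadj a ha b (hB' hb))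
    (by simpa using hhA) (by simpa [flatten_map_singleton] using fun b hb => hhB b (hB' hb))
  rwa [flatten_map_singleton, length_toList, length_toList, hcard, ← two_mul] at this

lemma exists_sum_degreeIn_nbhdIn_le {k : ℕ} (hk : k ≠ 0) {γ : ℝ} (hγ : 0 < γ) :
    ∃ N : ℕ, ∀ n ≥ N, ∀ G : SimpleGraph (Fin n), WheelFree (2 * k + 1) G → ∀ v,
      ∑ u ∈ nbhdIn G univ v, (degreeIn G (nbhdIn G univ v) u : ℝ) ≤ γ * n ^ 2 := by
  obtain ⟨N, hN⟩ := exists_sum_degreeIn_le_mul_sq hk k hγ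
  refine ⟨N, fun n hn G hG v => hN n hn G _ ((card_le_univ _).trans_eq (by simp)) ?_⟩
  intro K hK hKk
  by_contra! hlt
  refine hG ?_
  rw [← hKk] at hlt ⊢
  exact containsCopy_wheelGraph_of_complete hlt.le (fun a ha => (mem_nbhdIn.1 (hK ha)).2)
    (fun b hb => (mem_nbhdIn.1 (mem_commonNbhd.1 hb).1).2)
    (fun a ha b hb => (mem_commonNbhd.1 hb).2 a ha)

end KovariSosTuran

section Symmetrization

variable {V : Type*}

/-- The graph obtained from `G` by deleting all edges at `v` and then joining `v` to `N`. -/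
def reattach (G : SimpleGraph V) (v : V) (N : Finset V) : SimpleGraph V where
  Adj x y := x ≠ y ∧ ((x ≠ v ∧ y ≠ v ∧ G.Adj x y) ∨ (x = v ∧ y ∈ N) ∨ (y = v ∧ x ∈ N))
  symm := ⟨fun x y h => ⟨h.1.symm, by have := G.adj_comm x y; tauto⟩⟩
  loopless := ⟨fun _ h => h.1 rfl⟩

variable {G : SimpleGraph V} {v : V} {N W : Finset V}

lemma containsCopy_of_containsCopy_reattach {α : Type*} [Fintype α] {F : SimpleGraph α}
    (hW : Fintype.card α < #W) (hWN : ∀ u ∈ W, ∀ w ∈ N, G.Adj u w)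
    (hF : ContainsCopy F (reattach G v N)) : ContainsCopy F G := by
  classical
  obtain ⟨f, hf⟩ := hF
  obtain ⟨u, huW, hu⟩ : ∃ u ∈ W, u ∉ univ.map f :=
    exists_mem_notMem_of_card_lt_card (by simpa using hW)
  have hfu : ∀ b, f b ≠ u := by simpa using hu
  have hv : ∀ b, f b = v → Equiv.swap v u (f b) = u := fun b hb => by
    rw [hb, Equiv.swap_apply_left]
  have hne : ∀ b, f b ≠ v → Equiv.swap v u (f b) = f b := fun b hb =>
    Equiv.swap_apply_of_ne_of_ne hb (hfu b)
  refine ⟨f.trans (Equiv.swap v u).toEmbedding, fun x y hxy => ?_⟩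
  change G.Adj (Equiv.swap v u (f x)) (Equiv.swap v u (f y))
  obtain ⟨hfxy, hxy | ⟨hx, hy⟩ | ⟨hy, hx⟩⟩ := hf x y hxy
  · rw [hne x hxy.1, hne y hxy.2.1]
    exact hxy.2.2
  · rw [hv x hx, hne y (hx ▸ hfxy.symm)]
    exact hWN u huW _ hy
  · rw [hv y hy, hne x (hy ▸ hfxy)]
    exact (hWN u huW _ hx).symm

lemma edgeCount_reattach [Fintype V] (hv : v ∉ N) :
    edgeCount (reattach G v N) + degreeIn G univ v = edgeCount G + #N := by
  classical
  have hself : ∀ H : SimpleGraph V, degreeIn H {v} v = 0 := fun H =>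
    card_eq_zero.2 (by ext; simp +contextual)
  have hrest : ∑ x ∈ ({v} : Finset V)ᶜ, degreeIn (reattach G v N) {v}ᶜ x =
      ∑ x ∈ ({v} : Finset V)ᶜ, degreeIn G {v}ᶜ x := by
    refine sum_congr rfl fun x hx => ?_
    simp only [degreeIn]
    congr 1
    ext y
    simp only [mem_nbhdIn, mem_compl, mem_singleton, reattach] at hx ⊢
    have := G.ne_of_adj (a := x) (b := y)
    tauto
  have hnew : degreeIn (reattach G v N) {v}ᶜ v = #N := by
    rw [degreeIn]
    congr 1
    ext y
    have : y ∈ N → y ≠ v := fun hy => ne_of_mem_of_not_mem hy hv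
    simp only [mem_nbhdIn, mem_compl, mem_singleton, reattach]
    tauto
  have hG := two_mul_edgeCount G {v}
  have hreattach := two_mul_edgeCount (reattach G v N) {v}
  have hdeg := degreeIn_add_compl G {v} v
  simp only [sum_singleton, hself, hnew, hrest] at hG hreattach hdeg
  omega

lemma card_le_degreeIn_of_isExWheel {t n : ℕ} {G : SimpleGraph (Fin n)} (hG : IsExWheel t G)
    {v : Fin n} {W N : Finset (Fin n)} (hW : t < #W) (hWN : ∀ u ∈ W, ∀ w ∈ N, G.Adj u w)
    (hv : v ∉ N) : #N ≤ degreeIn G univ v := by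
  have hfree : WheelFree t (reattach G v N) := fun hc =>
    hG.1 (containsCopy_of_containsCopy_reattach (by simpa using hW) hWN hc)
  have hcount := edgeCount_reattach (G := G) hv
  have hle := hG.2 _ hfree
  omega

lemma exists_subset_degreeIn_ge {A B : Finset V} {m : ℕ} {θ : ℝ} (hθ : 0 < θ)
    (hA : m + missing G A B / θ ≤ #A) :
    ∃ W ⊆ A, #W = m ∧ ∀ u ∈ W, (#B : ℝ) - degreeIn G B u ≤ θ := by
  have hbad : (#{u ∈ A | ¬ (#B : ℝ) - degreeIn G B u ≤ θ} : ℝ) * θ ≤ missing G A B :=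
    calc (#{u ∈ A | ¬ (#B : ℝ) - degreeIn G B u ≤ θ} : ℝ) * θ
        = ∑ u ∈ A with ¬ (#B : ℝ) - degreeIn G B u ≤ θ, θ := by simp
      _ ≤ missing G {u ∈ A | ¬ (#B : ℝ) - degreeIn G B u ≤ θ} B :=
        sum_le_sum fun u hu => (not_le.1 (mem_filter.1 hu).2).le
      _ ≤ missing G A B := missing_mono_left (filter_subset _ _)
  have hsplit : (#{u ∈ A | (#B : ℝ) - degreeIn G B u ≤ θ} : ℝ) +
      #{u ∈ A | ¬ (#B : ℝ) - degreeIn G B u ≤ θ} = #A := by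
    exact_mod_cast card_filter_add_card_filter_not _
  have hcard : m ≤ #{u ∈ A | (#B : ℝ) - degreeIn G B u ≤ θ} := by
    have := (le_div_iff₀ hθ).2 hbad
    exact_mod_cast (by linarith : (m : ℝ) ≤ #{u ∈ A | (#B : ℝ) - degreeIn G B u ≤ θ})
  obtain ⟨W, hW, hWm⟩ := exists_subset_card_eq hcard
  exact ⟨W, hW.trans (filter_subset _ _), hWm, fun u hu => (mem_filter.1 (hW hu)).2⟩

-- Any vertex can be reattached to the common neighbourhood of `t + 1` typical vertices of `A`.
lemma sub_le_degreeIn_of_isExWheel {t n : ℕ} {G : SimpleGraph (Fin n)} (hG : IsExWheel t G)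
    {A B : Finset (Fin n)} {θ : ℝ} (hθ : 0 < θ) (hA : t + 1 + missing G A B / θ ≤ #A) (v : Fin n) :
    (#B : ℝ) - (t + 1) * θ - 1 ≤ degreeIn G univ v := by
  obtain ⟨W, -, hWt, hWθ⟩ := exists_subset_degreeIn_ge (m := t + 1) hθ (by exact_mod_cast hA)
  have hdeg : #((commonNbhd G B W).erase v) ≤ degreeIn G univ v :=
    card_le_degreeIn_of_isExWheel hG (by omega)
      (fun u hu w hw => (mem_commonNbhd.1 (mem_erase.1 hw).2).2 u hu) (by simp)
  have hmiss : ((∑ u ∈ W, (#B - degreeIn G B u) : ℕ) : ℝ) ≤ (t + 1) * θ := by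
    push_cast [Nat.cast_sub degreeIn_le_card]
    exact (sum_le_card_nsmul W _ θ hWθ).trans_eq (by simp [hWt])
  have hcommon := card_le_card_commonNbhd_add G B W
  have herase := pred_card_le_card_erase (s := commonNbhd G B W) (a := v)
  have hnat : #B ≤ degreeIn G univ v + 1 + ∑ u ∈ W, (#B - degreeIn G B u) := by omega
  have hreal : (#B : ℝ) ≤ degreeIn G univ v + 1 + ((∑ u ∈ W, (#B - degreeIn G B u) : ℕ) : ℝ) := by
    exact_mod_cast hnat
  linarith

end Symmetrization

section AlmostComplete

variable {V : Type*} {G : SimpleGraph V} {S T W : Finset V} {m : ℕ}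

/-- Every vertex of `S` is adjacent to all but at most `m` elements of `T`. -/
def AlmostComplete (G : SimpleGraph V) (S T : Finset V) (m : ℕ) : Prop :=
  ∀ u ∈ S, #T ≤ degreeIn G T u + m

lemma AlmostComplete.card_le_card_commonNbhd_add (h : AlmostComplete G S T m) (hW : W ⊆ S) :
    #T ≤ #(commonNbhd G T W) + #W * m := by
  have hsum : ∑ u ∈ W, (#T - degreeIn G T u) ≤ #W * m :=
    sum_le_card_nsmul W _ m fun u hu => by have := h u (hW hu); omega
  have := OddWheel.card_le_card_commonNbhd_add G T W
  omega

lemma AlmostComplete.card_sdiff_commonNbhd_le [DecidableEq V] (h : AlmostComplete G S T m)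
    (hW : W ⊆ S) : #(T \ commonNbhd G T W) ≤ #W * m := by
  have hle := h.card_le_card_commonNbhd_add hW
  have hcard : #(T \ commonNbhd G T W) + #(commonNbhd G T W) = #T :=
    card_sdiff_add_card_eq_card fun x hx => (mem_commonNbhd.1 hx).1
  omega

end AlmostComplete

section Stability

variable {V : Type*} [Fintype V] [DecidableEq V] {G : SimpleGraph V} {A S : Finset V} {d ε m : ℝ}

-- The neighbourhood of a vertex of maximum degree is one side of the bipartition.
lemma exists_bipartition [Nonempty V]
    (hnbhd : ∀ v, ∑ u ∈ nbhdIn G univ v, (degreeIn G (nbhdIn G univ v) u : ℝ) ≤ ε)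
    (hedges : Fintype.card V ^ 2 ≤ 4 * edgeCount G) :
    ∃ A : Finset V, missing G A Aᶜ ≤ ε ∧ ∑ u ∈ A, (degreeIn G A u : ℝ) ≤ ε ∧
      ∑ u ∈ Aᶜ, (degreeIn G Aᶜ u : ℝ) ≤ ε ∧ ((#A : ℝ) - #Aᶜ) ^ 2 ≤ 2 * ε := by
  obtain ⟨v, -, hv⟩ := exists_max_image univ (degreeIn G univ) univ_nonempty
  set A := nbhdIn G univ v
  have hn : (#A : ℝ) + #Aᶜ = Fintype.card V := by exact_mod_cast card_add_card_compl A
  have hedges' : (Fintype.card V : ℝ) ^ 2 ≤ 2 * (∑ u ∈ A, (degreeIn G A u : ℝ) +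
      ∑ u ∈ Aᶜ, (degreeIn G Aᶜ u : ℝ) + 2 * ∑ u ∈ A, (degreeIn G Aᶜ u : ℝ)) := by
    have := two_mul_edgeCount G A
    exact_mod_cast (by omega : _ ≤ 2 * (_ + _ + 2 * _))
  have hmax : ∑ u ∈ A, (degreeIn G Aᶜ u : ℝ) + ∑ u ∈ Aᶜ, (degreeIn G Aᶜ u : ℝ) ≤ #A * #Aᶜ := by
    have hle : ∑ u ∈ Aᶜ, (degreeIn G A u + degreeIn G Aᶜ u) ≤ #Aᶜ * #A :=
      sum_le_card_nsmul _ _ _ fun u _ => by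
        rw [degreeIn_add_compl]
        exact hv u (mem_univ u)
    rw [sum_add_distrib, ← sum_degreeIn_comm G A, mul_comm] at hle
    exact_mod_cast hle
  have hA := hnbhd v
  have hnonneg : 0 ≤ ∑ u ∈ Aᶜ, (degreeIn G Aᶜ u : ℝ) := sum_nonneg fun _ _ => Nat.cast_nonneg _
  rw [← hn] at hedges'
  have hsq := sq_nonneg ((#A : ℝ) - #Aᶜ)
  refine ⟨A, ?_, hA, ?_, ?_⟩
  · rw [missing_eq_sub]
    linarith
  · linarith
  · linarith

lemma exists_forall_degreeIn_le (hd : 0 < d) (hdm : 4 * d ≤ m)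
    (hdeg : ∀ v, m ≤ degreeIn G univ v)
    (hprod : ∀ v, (degreeIn G A v : ℝ) * degreeIn G Aᶜ v ≤ 2 * d ^ 2) :
    ∃ S : Finset V, (∀ v ∈ S, (degreeIn G A v : ℝ) ≤ d) ∧
      ∀ v ∈ Sᶜ, (degreeIn G Aᶜ v : ℝ) ≤ d := by
  have hsum : ∀ v, m ≤ (degreeIn G A v : ℝ) + degreeIn G Aᶜ v := fun v => by
    exact_mod_cast degreeIn_add_compl G A v ▸ hdeg v
  have hmin : ∀ x y : ℝ, x ≤ y → m ≤ x + y → x * y ≤ 2 * d ^ 2 → x ≤ d := by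
    intro x y hxy hxm hprod
    by_contra! hx
    nlinarith
  refine ⟨univ.filter fun v => degreeIn G A v ≤ degreeIn G Aᶜ v, fun v hv => ?_, fun v hv => ?_⟩
  · exact hmin _ _ (by exact_mod_cast (mem_filter.1 hv).2) (hsum v) (hprod v)
  · rw [mem_compl, mem_filter_univ, not_le] at hv
    exact hmin _ (degreeIn G A v) (by exact_mod_cast hv.le) (by linarith [hsum v])
      (by linarith [hprod v])

lemma card_sdiff_le_of_degreeIn_le (hd : 0 < d) (hdm : 2 * d ≤ m)
    (hdeg : ∀ v, m ≤ degreeIn G univ v) (hS : ∀ v ∈ S, (degreeIn G A v : ℝ) ≤ d)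
    (hA : ∑ u ∈ Aᶜ, (degreeIn G Aᶜ u : ℝ) ≤ d ^ 2) : (#(S \ A) : ℝ) ≤ d := by
  have hlarge : ∀ v ∈ S \ A, d ≤ degreeIn G Aᶜ v := by
    intro v hv
    have hsum : (degreeIn G A v : ℝ) + degreeIn G Aᶜ v = degreeIn G univ v := by
      exact_mod_cast degreeIn_add_compl G A v
    linarith [hdeg v, hS v (mem_sdiff.1 hv).1]
  have hcount : (#(S \ A) : ℝ) * d ≤ d * d :=
    calc (#(S \ A) : ℝ) * d = ∑ _v ∈ S \ A, d := by simp
      _ ≤ ∑ v ∈ S \ A, (degreeIn G Aᶜ v : ℝ) := sum_le_sum hlarge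
      _ ≤ ∑ v ∈ Aᶜ, (degreeIn G Aᶜ v : ℝ) :=
        sum_le_sum_of_subset_of_nonneg (fun v hv => by simp_all) fun _ _ _ => Nat.cast_nonneg _
      _ ≤ d * d := by rwa [← sq]
  exact le_of_mul_le_mul_right hcount hd

lemma card_compl_le_add_sdiff (A S : Finset V) : #Sᶜ ≤ #Aᶜ + #(A \ S) := by
  refine (card_le_card fun v hv => ?_).trans (card_union_le _ _)
  by_cases v ∈ A <;> simp_all

lemma card_compl_le_degreeIn_add {v : V} (hv : (degreeIn G A v : ℝ) ≤ d)
    (hSA : (#(S \ A) : ℝ) ≤ d) (hAS : (#(A \ S) : ℝ) ≤ d)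
    (hdeg : (#Aᶜ : ℝ) ≤ degreeIn G univ v + m) : (#Sᶜ : ℝ) ≤ degreeIn G Sᶜ v + (m + 3 * d) := by
  have hcard : (#Sᶜ : ℝ) ≤ #Aᶜ + #(A \ S) := by exact_mod_cast card_compl_le_add_sdiff A S
  have hsum : (degreeIn G A v : ℝ) + degreeIn G Aᶜ v = degreeIn G univ v := by
    exact_mod_cast degreeIn_add_compl G A v
  have hmove : (degreeIn G Aᶜ v : ℝ) ≤ degreeIn G Sᶜ v + #(S \ A) := by
    have hsplit := degreeIn_inter_add_sdiff G Aᶜ Sᶜ v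
    have hinter : degreeIn G (Aᶜ ∩ Sᶜ) v ≤ degreeIn G Sᶜ v := degreeIn_mono inter_subset_right
    have hsdiff : degreeIn G (Aᶜ \ Sᶜ) v ≤ #(Aᶜ \ Sᶜ) := degreeIn_le_card
    rw [compl_sdiff_compl] at hsplit hsdiff
    exact_mod_cast (by omega : degreeIn G Aᶜ v ≤ degreeIn G Sᶜ v + #(S \ A))
  linarith

lemma le_add_floor {a b : ℕ} {x y : ℝ} (hy : 0 ≤ y) (hxy : x ≤ y) (h : (a : ℝ) ≤ b + x) :
    a ≤ b + ⌊y⌋₊ := by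
  rw [add_comm, ← Nat.floor_add_natCast hy]
  exact Nat.le_floor (by linarith)

lemma exists_almostComplete_of_bipartition {n t : ℕ} {G : SimpleGraph (Fin n)}
    (hG : IsExWheel t G) {A : Finset (Fin n)} (hd : 1 ≤ d) (hdn : 16 * ((t + 7) * d) ≤ n)
    (hnbhd : ∀ v, ∑ u ∈ nbhdIn G univ v, (degreeIn G (nbhdIn G univ v) u : ℝ) ≤ d ^ 2)
    (hmissing : missing G A Aᶜ ≤ d ^ 2) (hA : ∑ u ∈ A, (degreeIn G A u : ℝ) ≤ d ^ 2)
    (hAc : ∑ u ∈ Aᶜ, (degreeIn G Aᶜ u : ℝ) ≤ d ^ 2)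
    (hdiff : ((#A : ℝ) - #Aᶜ) ^ 2 ≤ 2 * d ^ 2) :
    ∃ S, AlmostComplete G S Sᶜ ⌊(t + 7) * d⌋₊ ∧ AlmostComplete G Sᶜ S ⌊(t + 7) * d⌋₊ ∧
      #S ≤ #Sᶜ + ⌊(t + 7) * d⌋₊ ∧ #Sᶜ ≤ #S + ⌊(t + 7) * d⌋₊ := by
  have hd0 : 0 < d := by linarith
  have ht : 0 ≤ t * d := by positivity
  have htd : (t : ℝ) ≤ t * d := le_mul_of_one_le_right t.cast_nonneg hd
  have hn : (#A : ℝ) + #Aᶜ = n := by exact_mod_cast (card_add_card_compl A).trans (by simp)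
  obtain ⟨hge, hle⟩ : -(2 * d) ≤ (#A : ℝ) - #Aᶜ ∧ (#A : ℝ) - #Aᶜ ≤ 2 * d :=
    abs_le.1 (abs_le_of_sq_le_sq (by nlinarith) (by linarith))
  have hdiv : missing G A Aᶜ / d ≤ d := (div_le_iff₀ hd0).2 (by rwa [← sq])
  have hdegAc : ∀ v, (#Aᶜ : ℝ) ≤ degreeIn G univ v + (t + 2) * d := fun v => by
    linarith [sub_le_degreeIn_of_isExWheel hG hd0 (B := Aᶜ) (A := A) (by linarith) v]
  have hdegA : ∀ v, (#Aᶜᶜ : ℝ) ≤ degreeIn G univ v + (t + 4) * d := fun v => by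
    rw [compl_compl]
    linarith [hdegAc v]
  obtain ⟨S, hS, hSc⟩ := exists_forall_degreeIn_le (A := A) hd0 le_rfl
    (fun v => by linarith [hdegAc v])
    fun v => (degreeIn_mul_degreeIn_le G A Aᶜ v).trans (by linarith [hnbhd v])
  have hSA : (#(S \ A) : ℝ) ≤ d :=
    card_sdiff_le_of_degreeIn_le hd0 le_rfl (fun v => by linarith [hdegAc v]) hS hAc
  have hAS : (#(A \ S) : ℝ) ≤ d := by
    rw [← compl_sdiff_compl]
    exact card_sdiff_le_of_degreeIn_le hd0 le_rfl (fun v => by linarith [hdegAc v]) hSc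
      (by rwa [compl_compl])
  have hcardSc : (#Sᶜ : ℝ) ≤ #Aᶜ + #(A \ S) := by exact_mod_cast card_compl_le_add_sdiff A S
  have hcardS : (#S : ℝ) ≤ #A + #(S \ A) := by
    have := card_compl_le_add_sdiff Aᶜ Sᶜ
    rw [compl_compl, compl_compl, compl_sdiff_compl] at this
    exact_mod_cast this
  have hsumS : (#S : ℝ) + #Sᶜ = n := by exact_mod_cast (card_add_card_compl S).trans (by simp)
  have hd7 : 0 ≤ (t + 7) * d := by positivity
  refine ⟨S, fun v hv => ?_, fun v hv => ?_, ?_, ?_⟩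
  · exact le_add_floor hd7 (by linarith) (card_compl_le_degreeIn_add (hS v hv) hSA hAS (hdegAc v))
  · have := card_compl_le_degreeIn_add (S := Sᶜ) (hSc v hv) (by rwa [compl_sdiff_compl])
      (by rwa [compl_sdiff_compl]) (hdegA v)
    rw [compl_compl] at this
    exact le_add_floor hd7 (by linarith) this
  · exact le_add_floor (x := 4 * d) hd7 (by linarith) (by linarith)
  · exact le_add_floor (x := 4 * d) hd7 (by linarith) (by linarith)

lemma exists_almostComplete_of_isExWheel {k : ℕ} (hk : k ≠ 0) (c : ℕ) :
    ∃ N : ℕ, ∀ n ≥ N, ∀ G : SimpleGraph (Fin n), IsExWheel (2 * k + 1) G →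
      n ^ 2 ≤ 4 * edgeCount G → ∃ (S : Finset (Fin n)) (m : ℕ), c * m ≤ n ∧
        AlmostComplete G S Sᶜ m ∧ AlmostComplete G Sᶜ S m ∧ #S ≤ #Sᶜ + m ∧ #Sᶜ ≤ #S + m := by
  obtain ⟨δ, hδ0, hδ⟩ : ∃ δ : ℝ, 0 < δ ∧ (((2 * k + 1 : ℕ) + 7) * δ) * (c + 16) = 1 :=
    ⟨1 / (((2 * k + 1 : ℕ) + 7) * (c + 16)), by positivity, by field_simp⟩
  obtain ⟨N₀, hN₀⟩ := exists_sum_degreeIn_nbhdIn_le hk (γ := δ ^ 2) (by positivity)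
  obtain ⟨N₁, hN₁⟩ := exists_nat_ge (1 / δ)
  refine ⟨max N₀ (N₁ + 1), fun n hn G hG hedges => ?_⟩
  have hδn : 1 ≤ δ * n := by
    have : 1 / δ ≤ (n : ℝ) := hN₁.trans (by exact_mod_cast (by omega : N₁ ≤ n))
    rwa [div_le_iff₀ hδ0, mul_comm] at this
  have : NeZero n := ⟨by omega⟩
  have hnbhd := hN₀ n (by omega) G hG.1
  simp only [← mul_pow] at hnbhd
  obtain ⟨A, hmissing, hA, hAc, hdiff⟩ := exists_bipartition hnbhd (by simpa using hedges)
  have hscale : (c + 16) * (((2 * k + 1 : ℕ) + 7) * (δ * n)) = (n : ℝ) := by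
    linear_combination n * hδ
  have hc : 0 ≤ c * (((2 * k + 1 : ℕ) + 7) * (δ * n)) := by positivity
  have hpos : 0 ≤ ((2 * k + 1 : ℕ) + 7) * (δ * n) := by positivity
  obtain ⟨S, hS⟩ := exists_almostComplete_of_bipartition hG hδn (by linarith) hnbhd hmissing hA hAc
    hdiff
  refine ⟨S, _, ?_, hS⟩
  have hfloor := Nat.floor_le hpos
  exact_mod_cast (by nlinarith : (c : ℝ) * ⌊((2 * k + 1 : ℕ) + 7) * (δ * n)⌋₊ ≤ n)

end Stability

section AlmostJoin

variable {V : Type*} {G : SimpleGraph V} {S T F U X : Finset V} {k m f i j d t : ℕ} {u v x y : V}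

/-- `S` and `T` are joined completely up to at most `m` missing neighbours per vertex, and both
induce graphs of maximum degree less than `k`. -/
structure IsAlmostJoin (G : SimpleGraph V) (S T : Finset V) (k m : ℕ) : Prop where
  degree_left : ∀ u ∈ S, degreeIn G S u < k
  degree_right : ∀ u ∈ T, degreeIn G T u < k
  left : AlmostComplete G S T m
  right : AlmostComplete G T S m

lemma IsAlmostJoin.symm (h : IsAlmostJoin G S T k m) : IsAlmostJoin G T S k m :=
  ⟨h.degree_right, h.degree_left, h.right, h.left⟩

lemma AlmostComplete.degreeIn_lt (hST : AlmostComplete G S T m)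
    (hG : ¬ ContainsCopy (wheelGraph (2 * k + 1)) G) (hT : (k + 1) * m + k ≤ #T) (hv : v ∈ S) :
    degreeIn G S v < k := by
  classical
  by_contra! hcon
  obtain ⟨U, hU, rfl⟩ := exists_subset_card_eq hcon
  have hUS : ∀ u ∈ U, u ∈ S ∧ G.Adj v u := fun u hu => mem_nbhdIn.1 (hU hu)
  have hcommon := hST.card_le_card_commonNbhd_add (W := insert v U)
    (insert_subset hv fun u hu => (hUS u hu).1)
  have hinsert := Nat.mul_le_mul_right m (card_insert_le v U)
  exact hG (containsCopy_wheelGraph_of_complete (A := U) (B := commonNbhd G T (insert v U))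
    (by omega) (fun u hu => (hUS u hu).2)
    (fun x hx => (mem_commonNbhd.1 hx).2 v (mem_insert_self v U))
    fun u hu x hx => (mem_commonNbhd.1 hx).2 u (mem_insert_of_mem hu))

lemma IsLinearForest.append {P Q : List (List V)} (hP : IsLinearForest G P)
    (hQ : IsLinearForest G Q) (hPQ : ∀ x ∈ P.flatten, x ∉ Q.flatten) :
    IsLinearForest G (P ++ Q) where
  nodup := by
    rw [List.flatten_append, List.nodup_append]
    exact ⟨hP.nodup, hQ.nodup, fun x hx y hy hxy => hPQ x hx (hxy ▸ hy)⟩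
  ne_nil := List.forall_mem_append.2 ⟨hP.ne_nil, hQ.ne_nil⟩
  isChain := List.forall_mem_append.2 ⟨hP.isChain, hQ.isChain⟩

-- The rim alternates between the vertices of `U` and paths in `T`: those of `P₀`, and paths with
-- the lengths `R` picked greedily among the common neighbours of `v` and `U`.
lemma containsCopy_wheelGraph_of_hub [DecidableEq V] (hST : AlmostComplete G S T m) (hv : v ∈ S)
    (hU : U ⊆ nbhdIn G S v) {P₀ : List (List V)} (hP₀ : IsLinearForest G P₀)
    (hadj : ∀ u ∈ insert v U, ∀ x ∈ P₀.flatten, G.Adj u x) {R : List ℕ} (hR : ∀ r ∈ R, 0 < r)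
    (hpaths : ∀ r ∈ R, HasRobustPaths G T f r) (hlen : P₀.length + R.length = #U)
    (hsize : #U + P₀.flatten.length + R.sum = t) (hf : (#U + 1) * m + t ≤ f) :
    ContainsCopy (wheelGraph (t + 1)) G := by
  have hUS : ∀ u ∈ U, u ∈ S ∧ G.Adj v u := fun u hu => mem_nbhdIn.1 (hU hu)
  set F := (T \ commonNbhd G T (insert v U)) ∪ P₀.flatten.toFinset
  have hF : #F + R.sum ≤ f := by
    have hcommon := hST.card_sdiff_commonNbhd_le (W := insert v U)
      (insert_subset hv fun u hu => (hUS u hu).1)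
    have hinsert := Nat.mul_le_mul_right m (card_insert_le v U)
    have hunion : #F ≤ _ := card_union_le _ _
    have htoFinset := P₀.flatten.toFinset_card_le
    omega
  obtain ⟨P, hP, hPR, hPsum, hPT, hPF⟩ := exists_isLinearForest_of_hasRobustPaths R hR hpaths F hF
  have hadj' : ∀ u ∈ insert v U, ∀ x ∈ (P₀ ++ P).flatten, G.Adj u x := by
    intro u hu x hx
    rw [List.flatten_append, List.mem_append] at hx
    refine hx.elim (hadj u hu x) fun hx => ?_
    have hxF := hPF x hx
    simp only [F, mem_union, mem_sdiff, not_or, not_and, not_not] at hxF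
    exact (mem_commonNbhd.1 (hxF.1 (hPT x hx))).2 u hu
  have hforest : IsLinearForest G (P₀ ++ P) :=
    hP₀.append hP fun x hx hxP => hPF x hxP (mem_union_right _ (by simpa using hx))
  have hwheel := containsCopy_wheelGraph_of_isLinearForest (h := v) (U := U.toList) hforest
    U.nodup_toList (by simp [hPR, hlen])
    (fun u hu => hadj' u (mem_insert_of_mem (by simpa using hu)))
    (fun u hu => (hUS u (by simpa using hu)).2) (hadj' v (mem_insert_self v U))
  rw [List.flatten_append, List.length_append, hPsum, length_toList, ← add_assoc, hsize] at hwheel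
  exact hwheel

open scoped Classical in
/-- The elements of `T` which lie in `F` or have a neighbour in `F ∩ T`. -/
noncomputable def closedNbhdIn (G : SimpleGraph V) (T F : Finset V) : Finset V :=
  T.filter fun x => x ∈ F ∨ ∃ u ∈ T, u ∈ F ∧ G.Adj x u

lemma notMem_of_notMem_closedNbhdIn (hx : x ∈ T) (hxF : x ∉ closedNbhdIn G T F) : x ∉ F := by
  simp_all [closedNbhdIn]

lemma notMem_of_adj_of_notMem_closedNbhdIn (hx : x ∈ T) (hxF : x ∉ closedNbhdIn G T F)
    (hy : y ∈ T) (hxy : G.Adj x y) : y ∉ F := by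
  simp only [closedNbhdIn, mem_filter, hx, true_and, not_or, not_exists, not_and] at hxF
  exact fun hyF => hxF.2 y hy hyF hxy

lemma card_closedNbhdIn_le (hT : ∀ u ∈ T, degreeIn G T u < k) : #(closedNbhdIn G T F) ≤ k * #F := by
  classical
  have hcover : closedNbhdIn G T F ⊆ (F ∩ T).biUnion fun u => insert u (nbhdIn G T u) := by
    intro x hx
    simp only [closedNbhdIn, mem_filter] at hx
    simp only [mem_biUnion, mem_inter, mem_insert, mem_nbhdIn]
    obtain ⟨hxT, hxF | ⟨u, huT, huF, hxu⟩⟩ := hx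
    · exact ⟨x, ⟨hxF, hxT⟩, .inl rfl⟩
    · exact ⟨u, ⟨huF, huT⟩, .inr ⟨hxT, hxu.symm⟩⟩
  calc #(closedNbhdIn G T F) ≤ #(F ∩ T) * k :=
        (card_le_card hcover).trans <| card_biUnion_le_card_mul _ _ _ fun u hu =>
          (card_insert_le _ _).trans (hT u (mem_inter.1 hu).2)
    _ ≤ k * #F := by
        rw [mul_comm]
        exact Nat.mul_le_mul_left k (card_le_card inter_subset_left)

lemma exists_notMem_closedNbhdIn (hT : ∀ u ∈ T, degreeIn G T u < k) (hX : k * f < #X)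
    (hF : #F ≤ f) : ∃ u ∈ X, u ∉ closedNbhdIn G T F :=
  exists_mem_notMem_of_card_lt_card
    (((card_closedNbhdIn_le hT).trans (Nat.mul_le_mul_left k hF)).trans_lt hX)

/-- The elements of `T` with at least `d` neighbours in `T`. -/
noncomputable def highDegree (G : SimpleGraph V) (T : Finset V) (d : ℕ) : Finset V :=
  T.filter fun u => d ≤ degreeIn G T u

@[simp]
lemma mem_highDegree : x ∈ highDegree G T d ↔ x ∈ T ∧ d ≤ degreeIn G T x := by simp [highDegree]

lemma highDegree_anti (h : i ≤ j) : highDegree G T j ⊆ highDegree G T i := fun _ hx =>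
  mem_highDegree.2 ⟨(mem_highDegree.1 hx).1, h.trans (mem_highDegree.1 hx).2⟩

lemma hasRobustPaths_one (h : f < #T) : HasRobustPaths G T f 1 := by
  intro F hF
  obtain ⟨x, hx, hxF⟩ := exists_mem_notMem_of_card_lt_card (hF.trans_lt h)
  exact ⟨[x], by simp [hx, hxF]⟩

lemma hasRobustPaths_two (hT : ∀ u ∈ T, degreeIn G T u < k) (h : k * f < #(highDegree G T 1)) :
    HasRobustPaths G T f 2 := by
  intro F hF
  obtain ⟨u, hu, huF⟩ := exists_notMem_closedNbhdIn hT h hF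
  rw [mem_highDegree] at hu
  obtain ⟨w, hw⟩ : (nbhdIn G T u).Nonempty := card_pos.1 hu.2
  rw [mem_nbhdIn] at hw
  have hu' := notMem_of_notMem_closedNbhdIn hu.1 huF
  have hw' := notMem_of_adj_of_notMem_closedNbhdIn hu.1 huF hw.1 hw.2
  exact ⟨[u, w], by simp [hw, hw.2.ne, hu.1, hu', hw']⟩

lemma hasRobustPaths_three (hT : ∀ u ∈ T, degreeIn G T u < k) (h : k * f < #(highDegree G T 2)) :
    HasRobustPaths G T f 3 := by
  intro F hF
  obtain ⟨u, hu, huF⟩ := exists_notMem_closedNbhdIn hT h hF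
  rw [mem_highDegree] at hu
  obtain ⟨w, z, hw, hz, hwz⟩ := one_lt_card_iff.1 (show 1 < #(nbhdIn G T u) from hu.2)
  rw [mem_nbhdIn] at hw hz
  have hu' := notMem_of_notMem_closedNbhdIn hu.1 huF
  have hw' := notMem_of_adj_of_notMem_closedNbhdIn hu.1 huF hw.1 hw.2
  have hz' := notMem_of_adj_of_notMem_closedNbhdIn hu.1 huF hz.1 hz.2
  exact ⟨[w, u, z], by
    simp [hw.1, hz.1, hu.1, hwz, hw.2.ne', hz.2.ne, hw.2.symm, hz.2, hu', hw', hz']⟩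

lemma exists_path_four (hxdeg : 2 ≤ degreeIn G T x)
    (hdeg : ∀ y ∈ T, G.Adj x y → 3 ≤ degreeIn G T y) :
    ∃ w ∈ T, ∃ y ∈ T, ∃ z ∈ T, [w, x, y, z].Nodup ∧ G.Adj w x ∧ G.Adj x y ∧ G.Adj y z := by
  classical
  obtain ⟨w, y, hw, hy, hwy⟩ := one_lt_card_iff.1 (show 1 < #(nbhdIn G T x) from hxdeg)
  rw [mem_nbhdIn] at hw hy
  obtain ⟨z, hz, hz'⟩ := exists_mem_notMem_of_card_lt_card
    (show #{x, w} < #(nbhdIn G T y) from card_le_two.trans_lt (hdeg y hy.1 hy.2))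
  rw [mem_nbhdIn] at hz
  simp only [mem_insert, mem_singleton, not_or] at hz'
  refine ⟨w, hw.1, y, hy.1, z, hz.1, ?_, hw.2.symm, hy.2, hz.2⟩
  simp [hw.2.ne', hwy, hy.2.ne, hz.2.ne, Ne.symm hz'.1, Ne.symm hz'.2]

lemma hasRobustPaths_four [DecidableEq V] (hT : ∀ u ∈ T, degreeIn G T u < k)
    (h : k * (k * f) + k * #(T \ highDegree G T 3) < #T) : HasRobustPaths G T f 4 := by
  intro F hF
  set F₁ := closedNbhdIn G T F
  set L := closedNbhdIn G T (T \ highDegree G T 3)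
  have hcard : #(closedNbhdIn G T F₁ ∪ L) < #T :=
    calc #(closedNbhdIn G T F₁ ∪ L) ≤ k * #F₁ + k * #(T \ highDegree G T 3) :=
          (card_union_le _ _).trans
            (add_le_add (card_closedNbhdIn_le hT) (card_closedNbhdIn_le hT))
      _ ≤ k * (k * f) + k * #(T \ highDegree G T 3) := by
          gcongr
          exact (card_closedNbhdIn_le hT).trans (Nat.mul_le_mul_left k hF)
      _ < #T := h
  obtain ⟨x, hx, hx'⟩ := exists_mem_notMem_of_card_lt_card hcard
  rw [mem_union, not_or] at hx'
  have hdeg : ∀ y ∈ T, y ∉ T \ highDegree G T 3 → 3 ≤ degreeIn G T y := fun y hy hy3 => by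
    simpa [hy] using hy3
  obtain ⟨w, hw, y, hy, z, hz, hnodup, hwx, hxy, hyz⟩ := exists_path_four
    (Nat.le_of_succ_le (hdeg x hx (notMem_of_notMem_closedNbhdIn hx hx'.2)))
    fun y hy hxy => hdeg y hy (notMem_of_adj_of_notMem_closedNbhdIn hx hx'.2 hy hxy)
  have hxF₁ := notMem_of_notMem_closedNbhdIn hx hx'.1
  have hyF₁ := notMem_of_adj_of_notMem_closedNbhdIn hx hx'.1 hy hxy
  have hwF := notMem_of_adj_of_notMem_closedNbhdIn hx hxF₁ hw hwx.symm
  have hxF := notMem_of_notMem_closedNbhdIn hx hxF₁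
  have hyF := notMem_of_notMem_closedNbhdIn hy hyF₁
  have hzF := notMem_of_adj_of_notMem_closedNbhdIn hy hyF₁ hz hyz
  exact ⟨[w, x, y, z], rfl, hnodup, by simp [hwx, hxy, hyz], by simp [hw, hx, hy, hz],
    by simp [hwF, hxF, hyF, hzF]⟩

end AlmostJoin

section Levels

variable {V : Type*} {G : SimpleGraph V} {S T : Finset V} {k m f M i j a b x y : ℕ}

lemma containsCopy_wheelGraph_of_replicate (h : AlmostComplete G S T m)
    (hi : (highDegree G S i).Nonempty) (hf : (i + 1) * m + 2 * k ≤ f) (hx : 0 < x) (hy : 0 < y)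
    (hpx : HasRobustPaths G T f x) (hpy : HasRobustPaths G T f y) (hab : a + b = i)
    (hsum : i + (a * x + b * y) = 2 * k) : ContainsCopy (wheelGraph (2 * k + 1)) G := by
  classical
  obtain ⟨v, hv⟩ := hi
  rw [mem_highDegree] at hv
  obtain ⟨U, hU, hUi⟩ := exists_subset_card_eq (show i ≤ #(nbhdIn G S v) from hv.2)
  have hR : ∀ r ∈ List.replicate a x ++ List.replicate b y, r = x ∨ r = y := by
    simp only [List.mem_append, List.mem_replicate]
    tauto
  refine containsCopy_wheelGraph_of_hub (f := f) (P₀ := [])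
    (R := List.replicate a x ++ List.replicate b y) h hv.1 hU ⟨by simp, by simp, by simp⟩ (by simp)
    ?_ ?_ (by simp [hab, hUi]) (by simpa [hUi] using hsum) (by rwa [hUi])
  · intro r hr
    obtain rfl | rfl := hR r hr <;> assumption
  · intro r hr
    obtain rfl | rfl := hR r hr <;> assumption

-- A hub in `S` of inner degree `i` with rim neighbours `U` in `S` leaves `2k - i` rim vertices,
-- forming `i` paths in `T`; if `i < k - 1` or `j > 0`, then paths of at most four vertices suffice.
lemma eq_zero_of_highDegree [DecidableEq V] (hk : 7 ≤ k)
    (hG : ¬ ContainsCopy (wheelGraph (2 * k + 1)) G) (h : IsAlmostJoin G S T k m)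
    (hf : (k + 1) * m + 2 * k ≤ f)
    (hi : k * f < #(highDegree G S i)) (hj : k * f < #(highDegree G T j)) (hji : j ≤ i)
    (hij : k ≤ i + j + 1)
    (hlow : i = j → 2 * i + 1 = k → #(T \ highDegree G T j) ≤ 2 * k * (k * f))
    (hT : k * (k * f) + k * (2 * k * (k * f)) + f < #T) : j = 0 := by
  by_contra hj0
  have hne : (highDegree G S i).Nonempty := card_pos.1 (by omega)
  have hik : i < k := by
    obtain ⟨v, hv⟩ := hne
    rw [mem_highDegree] at hv
    exact hv.2.trans_lt (h.degree_left v hv.1)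
  have hfi : (i + 1) * m + 2 * k ≤ f := by
    have := Nat.mul_le_mul_right m (Nat.add_le_add_right hik.le 1)
    omega
  have hmono : ∀ d ≤ j, k * f < #(highDegree G T d) := fun d hd =>
    hj.trans_le (card_le_card (highDegree_anti hd))
  have hone : HasRobustPaths G T f 1 := hasRobustPaths_one (by omega)
  have htwo : HasRobustPaths G T f 2 := hasRobustPaths_two h.degree_right (hmono 1 (by omega))
  rcases le_or_gt (2 * k) (3 * i) with hlarge | hi3
  · exact hG (containsCopy_wheelGraph_of_replicate (a := 2 * (k - i)) (b := 3 * i - 2 * k) h.left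
      hne hfi (by norm_num) (by norm_num) htwo hone (by omega) (by omega))
  have hthree : HasRobustPaths G T f 3 :=
    hasRobustPaths_three h.degree_right (hmono 2 (by omega))
  rcases le_or_gt k (2 * i) with hmedium | hi2
  · exact hG (containsCopy_wheelGraph_of_replicate (a := k - i) (b := 2 * i - k) h.left hne hfi
      (by norm_num) (by norm_num) hthree hone (by omega) (by omega))
  have hfour : HasRobustPaths G T f 4 := by
    refine hasRobustPaths_four h.degree_right ?_
    have hcard : #(T \ highDegree G T 3) ≤ 2 * k * (k * f) :=
      (card_le_card (sdiff_subset_sdiff subset_rfl (highDegree_anti (by omega)))).trans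
        (hlow (by omega) (by omega))
    have := Nat.mul_le_mul_left k hcard
    omega
  exact hG (containsCopy_wheelGraph_of_replicate (a := 2) (b := i - 2) h.left hne hfi
    (by norm_num) (by norm_num) hfour hthree (by omega) (by omega))

-- The missing pairs between `S` and the few vertices of `P₀` can be avoided by the choice of the
-- hub, so that `k - 1` neighbours of the hub are available on the rim next to `P₀`.
lemma IsLinearForest.length_flatten_ne {P : List (List V)} (hP : IsLinearForest G P)
    (hPT : ∀ x ∈ P.flatten, x ∈ T) (hP4 : P.flatten.length ≤ 4) (hk : 4 ≤ k)
    (hG : ¬ ContainsCopy (wheelGraph (2 * k + 1)) G) (h : IsAlmostJoin G S T k m)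
    (hf : (k + 1) * m + 2 * k ≤ f) (hS : k * f < #(highDegree G S (k - 1))) (hT : f < #T) :
    P.flatten.length ≠ P.length + 2 := by
  classical
  intro hlen
  set Q := P.flatten.toFinset
  have hQ4 : #Q ≤ 4 := (List.toFinset_card_le _).trans hP4
  have hQT : Q ⊆ T := fun x hx => hPT x (List.mem_toFinset.1 hx)
  set F := S \ commonNbhd G S Q
  have hF : #F ≤ f := by
    have hle : #F ≤ #Q * m := h.right.card_sdiff_commonNbhd_le hQT
    have := Nat.mul_le_mul_right m (show #Q ≤ k + 1 by omega)
    omega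
  obtain ⟨v, hv, hvF⟩ := exists_notMem_closedNbhdIn h.degree_left hS hF
  rw [mem_highDegree] at hv
  obtain ⟨U, hU, hUk⟩ := exists_subset_card_eq (show k - 1 ≤ #(nbhdIn G S v) from hv.2)
  have hUF : ∀ u ∈ insert v U, u ∈ S ∧ u ∉ F := by
    rw [forall_mem_insert]
    refine ⟨⟨hv.1, notMem_of_notMem_closedNbhdIn hv.1 hvF⟩, fun u hu => ?_⟩
    have hvu := mem_nbhdIn.1 (hU hu)
    exact ⟨hvu.1, notMem_of_adj_of_notMem_closedNbhdIn hv.1 hvF hvu.1 hvu.2⟩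
  have hadj : ∀ u ∈ insert v U, ∀ x ∈ P.flatten, G.Adj u x := by
    intro u hu x hx
    have hcommon : u ∈ commonNbhd G S Q := by
      have := hUF u hu
      simp_all [F]
    exact ((mem_commonNbhd.1 hcommon).2 x (List.mem_toFinset.2 hx)).symm
  have hmul := Nat.mul_le_mul_right m (show #U + 1 ≤ k + 1 by omega)
  refine hG (containsCopy_wheelGraph_of_hub h.left hv.1 hU hP hadj
    (R := List.replicate (k - 1 - P.length) 1) ?_ ?_ ?_ ?_ (f := f) (by omega))
  · simp +contextual [List.mem_replicate]
  · simp +contextual [List.mem_replicate, hasRobustPaths_one hT]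
  · simp only [List.length_replicate]
    omega
  · simp only [List.sum_replicate, smul_eq_mul]
    omega

lemma degreeIn_le_one (hk : 4 ≤ k) (hG : ¬ ContainsCopy (wheelGraph (2 * k + 1)) G)
    (h : IsAlmostJoin G S T k m) (hf : (k + 1) * m + 2 * k ≤ f)
    (hS : k * f < #(highDegree G S (k - 1))) (hT : f < #T) {u : V} (hu : u ∈ T) :
    degreeIn G T u ≤ 1 := by
  by_contra! hc
  obtain ⟨w, z, hw, hz, hwz⟩ := one_lt_card_iff.1 (show 1 < #(nbhdIn G T u) from hc)
  rw [mem_nbhdIn] at hw hz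
  have hpath : IsLinearForest G [[w, u, z]] := by
    refine ⟨?_, by simp, ?_⟩
    · simp [hwz, hw.2.ne', hz.2.ne]
    · simp [hw.2.symm, hz.2]
  exact hpath.length_flatten_ne (by simp [hw.1, hz.1, hu]) (by simp) hk hG h hf hS hT (by simp)

lemma eq_or_eq_of_adj (hk : 4 ≤ k) (hG : ¬ ContainsCopy (wheelGraph (2 * k + 1)) G)
    (h : IsAlmostJoin G S T k m) (hf : (k + 1) * m + 2 * k ≤ f)
    (hS : k * f < #(highDegree G S (k - 1))) (hT : f < #T) {u v w z : V} (hu : u ∈ T) (hv : v ∈ T)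
    (hw : w ∈ T) (hz : z ∈ T) (huv : G.Adj u v) (hwz : G.Adj w z) : w = u ∨ w = v := by
  by_contra! hne
  have hunique : ∀ {x y t}, x ∈ T → y ∈ T → t ∈ T → G.Adj t x → G.Adj t y → x = y :=
    fun hx hy ht htx hty => card_le_one.1 (degreeIn_le_one hk hG h hf hS hT ht) _
      (mem_nbhdIn.2 ⟨hx, htx⟩) _ (mem_nbhdIn.2 ⟨hy, hty⟩)
  have huz : u ≠ z := by
    rintro rfl
    exact hne.2 (hunique hw hv hu hwz.symm huv)
  have hvz : v ≠ z := by
    rintro rfl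
    exact hne.1 (hunique hw hu hv hwz.symm huv.symm)
  have hedges : IsLinearForest G [[u, v], [w, z]] := by
    refine ⟨?_, by simp, ?_⟩
    · simp [huv.ne, hwz.ne, hne.1.symm, hne.2.symm, huz, hvz]
    · simp [huv, hwz]
  exact hedges.length_flatten_ne (by simp [hu, hv, hw, hz]) (by simp) hk hG h hf hS hT (by simp)

lemma sum_degreeIn_le_two (hk : 4 ≤ k) (hG : ¬ ContainsCopy (wheelGraph (2 * k + 1)) G)
    (h : IsAlmostJoin G S T k m) (hf : (k + 1) * m + 2 * k ≤ f)
    (hS : k * f < #(highDegree G S (k - 1))) (hT : f < #T) : ∑ u ∈ T, degreeIn G T u ≤ 2 := by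
  classical
  have hsum : ∑ u ∈ T, degreeIn G T u ≤ #(highDegree G T 1) := by
    rw [highDegree, card_filter]
    refine sum_le_sum fun u hu => ?_
    have := degreeIn_le_one hk hG h hf hS hT hu
    split_ifs <;> omega
  have hnbr : ∀ u ∈ highDegree G T 1, u ∈ T ∧ ∃ v ∈ T, G.Adj u v := fun u hu => by
    rw [mem_highDegree] at hu
    obtain ⟨v, hv⟩ : (nbhdIn G T u).Nonempty := card_pos.1 hu.2
    exact ⟨hu.1, v, mem_nbhdIn.1 hv⟩
  obtain hempty | ⟨x, hx⟩ := (highDegree G T 1).eq_empty_or_nonempty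
  · simp_all
  obtain ⟨hxT, y, hyT, hxy⟩ := hnbr x hx
  have hsub : highDegree G T 1 ⊆ {x, y} := fun w hw => by
    obtain ⟨hwT, z, hzT, hwz⟩ := hnbr w hw
    simpa using eq_or_eq_of_adj hk hG h hf hS hT hxT hyT hwT hzT hxy hwz
  exact hsum.trans ((card_le_card hsub).trans card_le_two)

end Levels

section Level

variable {V : Type*} [DecidableEq V] {G : SimpleGraph V} {S : Finset V} {k M : ℕ}

lemma sum_degreeIn_add_card_le (hS : ∀ u ∈ S, degreeIn G S u < k) (i : ℕ) :
    ∑ u ∈ S, degreeIn G S u + #(S \ highDegree G S i) ≤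
      i * #S + k * #(highDegree G S (i + 1)) := by
  have hlow : #(S \ highDegree G S i) = ∑ u ∈ S, if i ≤ degreeIn G S u then 0 else 1 := by
    rw [highDegree, ← filter_not, card_filter]
    simp only [ite_not]
  have hhigh : k * #(highDegree G S (i + 1)) =
      ∑ u ∈ S, if i + 1 ≤ degreeIn G S u then k else 0 := by
    simp only [highDegree, card_filter, mul_sum, mul_ite, mul_one, mul_zero]
  have hconst : i * #S = ∑ _u ∈ S, i := by simp [mul_comm]
  rw [hlow, hhigh, hconst, ← sum_add_distrib, ← sum_add_distrib]
  refine sum_le_sum fun u hu => ?_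
  have := hS u hu
  split_ifs <;> omega

lemma exists_level (hS : ∀ u ∈ S, degreeIn G S u < k) (hM : M < #S) :
    ∃ i < k, M < #(highDegree G S i) ∧
      ∑ u ∈ S, degreeIn G S u + #(S \ highDegree G S i) ≤ i * #S + k * M := by
  have hzero : M < #(highDegree G S 0) := by simpa [highDegree] using hM
  set i := Nat.findGreatest (fun i => M < #(highDegree G S i)) k
  have hi : M < #(highDegree G S i) :=
    Nat.findGreatest_spec (P := fun i => M < #(highDegree G S i)) (Nat.zero_le k) hzero
  have hik : i < k := by
    obtain ⟨u, hu⟩ := card_pos.1 (Nat.zero_lt_of_lt hi)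
    rw [mem_highDegree] at hu
    exact hu.2.trans_lt (hS u hu.1)
  have hmax : #(highDegree G S (i + 1)) ≤ M :=
    not_lt.1 (Nat.findGreatest_is_greatest (P := fun i => M < #(highDegree G S i)) (by omega) hik)
  refine ⟨i, hik, hi, (sum_degreeIn_add_card_le hS i).trans ?_⟩
  gcongr

end Level

section Structure

-- Here `x ≤ i a + kM` and `y ≤ j b + kM` are the degree sums inside the two parts: the edge count
-- forces `i + j ≥ k - 1`, and if `i = j = (k - 1) / 2`, nearly all degrees in `T` equal `j`.
lemma le_level_add_level {k M a b i j s e x y c : ℕ} (he : 2 * e = x + y + 2 * c) (hc : c ≤ a * b)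
    (hi : i < k) (hj : j < k) (hE : (a + b) ^ 2 + k * (a + b) ≤ 4 * e + (a + b))
    (hx : x ≤ i * a + k * M) (hy : y + s ≤ j * b + k * M) (hn : k ^ 2 + 4 * k * M < a + b) :
    k ≤ i + j + 1 ∧ (i = j → 2 * i + 1 = k → s ≤ 2 * k * M) := by
  zify at *
  have key : (k - 1 : ℤ) * (a + b) + (a - b) ^ 2 + 2 * s ≤ 2 * (i * a + j * b) + 4 * k * M := by
    linarith
  constructor
  · by_contra! hcon
    have hdiff : ((i : ℤ) - j) ^ 2 ≤ k ^ 2 := sq_le_sq' (by omega) (by omega)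
    have hsum : (0 : ℤ) ≤ (k - (i + j + 2)) * (a + b) := mul_nonneg (by omega) (by omega)
    linarith [sq_nonneg ((i - j : ℤ) - 2 * (a - b)), sq_nonneg (i - j : ℤ)]
  · intro hij hik
    rw [← hij] at key
    have : (2 * i + 1 : ℤ) * (a + b) = k * (a + b) := by rw [hik]
    linarith [sq_nonneg ((a : ℤ) - b)]

variable {n k : ℕ} {G : SimpleGraph (Fin n)} {S : Finset (Fin n)}

lemma four_mul_missing_le (hS : ∀ u ∈ S, degreeIn G S u < k)
    (hS' : ∀ u ∈ Sᶜ, degreeIn G Sᶜ u < k) (hE : n ^ 2 + k * n ≤ 4 * edgeCount G + n) :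
    4 * missing G S Sᶜ ≤ k * n := by
  have hcard : #S + #Sᶜ = n := by simp [card_add_card_compl]
  have hdegree : ∀ X : Finset (Fin n), (∀ u ∈ X, degreeIn G X u < k) →
      ∑ u ∈ X, degreeIn G X u + #X ≤ k * #X := fun X hX => by
    simpa [sum_add_distrib, mul_comm] using
      sum_le_sum (f := fun u => degreeIn G X u + 1) (g := fun _ => k) hX
  have hedges := two_mul_edgeCount G S
  have h₁ := hdegree S hS
  have h₂ := hdegree Sᶜ hS'
  rw [missing_eq_sub]
  zify at hcard hedges h₁ h₂ hE
  have hint : 4 * ((#S : ℤ) * #Sᶜ - ∑ u ∈ S, (degreeIn G Sᶜ u : ℤ)) ≤ k * n := by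
    rw [← hcard] at hE ⊢
    linarith [sq_nonneg ((#S : ℤ) - #Sᶜ)]
  exact_mod_cast hint

lemma almostComplete_of_isExWheel (hG : IsExWheel (2 * k + 1) G) (hk : k ≠ 0)
    (hS : ∀ u ∈ S, degreeIn G S u < k) (hmissing : 4 * missing G S Sᶜ ≤ k * n)
    (hcard : 32 * (k + 1) + n ≤ 16 * #S) : AlmostComplete G S Sᶜ (8 * k * (k + 1) + k) := by
  intro v hv
  have hsize : (2 * k + 1 : ℕ) + 1 + missing G S Sᶜ / (4 * k) ≤ #S := by
    have hdiv : missing G S Sᶜ / (4 * k) ≤ n / 16 := by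
      rw [div_le_div_iff₀ (by positivity) (by norm_num)]
      linarith
    have : (32 * (k + 1) + n : ℝ) ≤ 16 * #S := by exact_mod_cast hcard
    push_cast
    linarith
  have hdegree := sub_le_degreeIn_of_isExWheel hG (by positivity) hsize v
  have hcast : #Sᶜ ≤ degreeIn G univ v + ((2 * k + 1 : ℕ) + 1) * (4 * k) + 1 := by
    rw [← Nat.cast_le (α := ℝ)]
    push_cast at hdegree ⊢
    linarith
  have hsplit := degreeIn_add_compl G S v
  have hlt := hS v hv
  have hring : ((2 * k + 1 : ℕ) + 1) * (4 * k) = 8 * k * (k + 1) := by ring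
  omega

lemma exists_isAlmostJoin_of_isExWheel (hk : k ≠ 0) :
    ∃ N : ℕ, ∀ n ≥ N, ∀ G : SimpleGraph (Fin n), IsExWheel (2 * k + 1) G →
      n ^ 2 + k * n ≤ 4 * edgeCount G + n → ∃ S : Finset (Fin n),
        IsAlmostJoin G S Sᶜ k (8 * k * (k + 1) + k) ∧ n ≤ 4 * #S ∧ n ≤ 4 * #Sᶜ := by
  obtain ⟨N, hN⟩ := exists_almostComplete_of_isExWheel hk (16 * (k + 2))
  refine ⟨max N (100 * (k + 1)), fun n hn G hG hE => ?_⟩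
  obtain ⟨S, m, hm, hS, hS', hle, hge⟩ := hN n (by omega) G hG (by
    have := Nat.mul_le_mul_right n (Nat.one_le_iff_ne_zero.2 hk)
    omega)
  have hcard : #S + #Sᶜ = n := by simp [card_add_card_compl]
  have hm' : 16 * (k * m) + 32 * m ≤ n := by linarith
  have hmul : (k + 1) * m + k = k * m + m + k := by ring
  have hdegree : ∀ u ∈ S, degreeIn G S u < k := fun _ => hS.degreeIn_lt hG.1 (by omega)
  have hdegree' : ∀ u ∈ Sᶜ, degreeIn G Sᶜ u < k := fun _ => hS'.degreeIn_lt hG.1 (by omega)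
  have hmissing := four_mul_missing_le hdegree hdegree' hE
  refine ⟨S, ⟨hdegree, hdegree', ?_, ?_⟩, by omega, by omega⟩
  · exact almostComplete_of_isExWheel hG hk hdegree hmissing (by omega)
  · have := almostComplete_of_isExWheel (S := Sᶜ) hG hk hdegree'
      (by rwa [missing_comm, compl_compl]) (by omega)
    rwa [compl_compl] at this

lemma sum_degreeIn_le_two_of_level {T : Finset (Fin n)} {m f i j : ℕ} (hk : 7 ≤ k)
    (hG : IsExWheel (2 * k + 1) G) (h : IsAlmostJoin G S T k m) (hf : (k + 1) * m + 2 * k ≤ f)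
    (hi : k * f < #(highDegree G S i)) (hj : k * f < #(highDegree G T j)) (hik : i < k)
    (hji : j ≤ i) (hij : k ≤ i + j + 1)
    (hlow : i = j → 2 * i + 1 = k → #(T \ highDegree G T j) ≤ 2 * k * (k * f))
    (hT : k * (k * f) + k * (2 * k * (k * f)) + f < #T) : ∑ u ∈ T, degreeIn G T u ≤ 2 := by
  obtain rfl := eq_zero_of_highDegree hk hG.1 h hf hi hj hji hij hlow hT
  obtain rfl : i = k - 1 := by omega
  exact sum_degreeIn_le_two (by omega) hG.1 h hf hi (by omega)

theorem exists_isAlmostJoin_sum_degreeIn_le_two (hk : 7 ≤ k) :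
    ∃ N C : ℕ, ∀ n ≥ N, ∀ G : SimpleGraph (Fin n), IsExWheel (2 * k + 1) G →
      n ^ 2 + k * n ≤ 4 * edgeCount G + n → ∃ S : Finset (Fin n),
        IsAlmostJoin G S Sᶜ k C ∧ ∑ u ∈ Sᶜ, degreeIn G Sᶜ u ≤ 2 := by
  obtain ⟨N, hN⟩ := exists_isAlmostJoin_of_isExWheel (k := k) (by omega)
  set C := 8 * k * (k + 1) + k
  set f := (k + 1) * C + 2 * k
  set X := k * (k * f) + k * (2 * k * (k * f)) + f
  refine ⟨max (max N (k ^ 2 + 4 * k * (k * f) + 1)) (4 * (X + k * f) + 4), C,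
    fun n hn G hG hE => ?_⟩
  obtain ⟨S, h, hS, hS'⟩ := hN n (by omega) G hG hE
  have hcard : #S + #Sᶜ = n := by simp [card_add_card_compl]
  obtain ⟨i, hi, hicard, hisum⟩ := exists_level (M := k * f) h.degree_left (by omega)
  obtain ⟨j, hj, hjcard, hjsum⟩ := exists_level (M := k * f) h.degree_right (by omega)
  have hedges := two_mul_edgeCount G S
  have hcut : ∑ v ∈ S, degreeIn G Sᶜ v ≤ #S * #Sᶜ := by
    simpa using sum_le_sum (s := S) fun v _ => (degreeIn_le_card : degreeIn G Sᶜ v ≤ #Sᶜ)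
  obtain ⟨hij, hlow⟩ := le_level_add_level hedges hcut hi hj (by rwa [hcard]) (by omega) hjsum
    (by omega)
  obtain ⟨-, hlow'⟩ := le_level_add_level (hedges.trans (by
    rw [add_comm (∑ v ∈ S, degreeIn G S v)])) (hcut.trans_eq (mul_comm _ _))
    hj hi
    (by rwa [add_comm #Sᶜ, hcard]) (by omega) hisum (by omega)
  rcases le_total j i with hji | hji
  · exact ⟨S, h, sum_degreeIn_le_two_of_level (f := f) hk hG h le_rfl hicard hjcard hi hji hij
      hlow (by omega)⟩
  · refine ⟨Sᶜ, by rw [compl_compl]; exact h.symm, ?_⟩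
    rw [compl_compl]
    exact sum_degreeIn_le_two_of_level (f := f) hk hG h.symm le_rfl hjcard hicard hj hji (by omega)
      hlow' (by omega)

end Structure

section WheelFree

variable {V : Type*} {G : SimpleGraph V} {S : Finset V} {e : Sym2 V} {k r : ℕ}

lemma exists_rim_of_containsCopy [NeZero r] (hr : 1 < r)
    (h : ContainsCopy (wheelGraph (r + 1)) G) :
    ∃ (c : V) (g : ZMod r → V), Function.Injective g ∧ (∀ i, G.Adj c (g i)) ∧
      ∀ i, G.Adj (g i) (g (i + 1)) := by
  obtain ⟨f, hf⟩ := h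
  refine ⟨f 0, fun i => f ⟨i.val + 1, by simpa using i.val_lt⟩, fun i j hij => ?_, fun i => ?_,
    fun i => ?_⟩
  · exact ZMod.val_injective r (by simpa using f.injective hij)
  · exact hf _ _ ⟨by simp [Fin.ext_iff], .inl rfl⟩
  · have hi := i.val_lt
    have hval : (i + 1).val = if i.val + 1 = r then 0 else i.val + 1 := by
      rw [ZMod.val_add, ZMod.val_one_eq_one_mod, Nat.mod_eq_of_lt hr]
      split_ifs with hir
      · rw [hir, Nat.mod_self]
      · exact Nat.mod_eq_of_lt (by omega)
    refine hf _ _ ⟨?_, ?_⟩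
    · simp only [ne_eq, Fin.ext_iff]
      split_ifs at hval <;> omega
    · simp only
      split_ifs at hval <;> omega

lemma le_card_rim_mem [NeZero r] (hr : 2 < r) {g : ZMod r → V} (hg : Function.Injective g)
    (hcycle : ∀ i, G.Adj (g i) (g (i + 1))) (hS : ∀ u ∉ S, ∀ v ∉ S, G.Adj u v → s(u, v) = e)
    [DecidablePred fun i => g i ∈ S] : r ≤ 2 * #{i | g i ∈ S} + 1 := by
  set I : Finset (ZMod r) := {i | g i ∈ S}
  set J : Finset (ZMod r) := {i | g i ∉ S ∧ g (i + 1) ∉ S}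
  have hJ : #J ≤ 1 := by
    refine card_le_one.2 fun i hi j hj => ?_
    simp only [J, mem_filter_univ] at hi hj
    have heq := (hS _ hi.1 _ hi.2 (hcycle i)).trans (hS _ hj.1 _ hj.2 (hcycle j)).symm
    rcases Sym2.eq_iff.1 heq with ⟨hij, -⟩ | ⟨hij, hji⟩
    · exact hg hij
    · have htwo : ((2 : ℕ) : ZMod r) = 0 := by
        have := hg hji
        rw [hg hij] at this
        push_cast
        linear_combination this
      exact absurd (Nat.le_of_dvd two_pos ((ZMod.natCast_eq_zero_iff 2 r).1 htwo)) (by omega)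
  have hcover : univ ⊆ I ∪ I.image (· - 1) ∪ J := fun i _ => by
    by_cases hi : g i ∈ S
    · simp [I, hi]
    by_cases hi' : g (i + 1) ∈ S
    · exact mem_union_left _ (mem_union_right _
        (mem_image.2 ⟨i + 1, by simpa [I] using hi', add_sub_cancel_right i 1⟩))
    · simp [J, hi, hi']
  calc r = #(univ : Finset (ZMod r)) := by rw [card_univ, ZMod.card]
    _ ≤ #I + #(I.image (· - 1)) + #J := (card_le_card hcover).trans
        ((card_union_le _ _).trans (Nat.add_le_add_right (card_union_le _ _) _))
    _ ≤ 2 * #I + 1 := by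
        have : #(I.image (· - 1)) ≤ #I := card_image_le
        omega

lemma exists_forall_ne_rim_mem [NeZero r] {c : V} {g : ZMod r → V} (hg : Function.Injective g)
    (hhub : ∀ i, G.Adj c (g i)) (hc : c ∉ S)
    (hS : ∀ u ∉ S, ∀ v ∉ S, G.Adj u v → s(u, v) = e) : ∃ d, ∀ i ≠ d, g i ∈ S := by
  by_cases hall : ∀ i, g i ∈ S
  · exact ⟨0, fun i _ => hall i⟩
  · push Not at hall
    obtain ⟨d, hd⟩ := hall
    refine ⟨d, fun i hi => of_not_not fun hiS => hi (hg ?_)⟩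
    exact Sym2.congr_right.1 ((hS c hc _ hiS (hhub i)).trans (hS c hc _ hd (hhub d)).symm)

lemma label_rim_eq {ι : Type*} [NeZero r] {ℓ : V → ι} {g : ZMod r → V}
    (hcycle : ∀ i, G.Adj (g i) (g (i + 1)))
    (hℓ : ∀ u ∈ S, ∀ v ∈ S, G.Adj u v → ℓ u = ℓ v) {d : ZMod r} (hd : ∀ i ≠ d, g i ∈ S) :
    ∀ i ≠ d, ℓ (g i) = ℓ (g (d + 1)) := by
  have hne : ∀ t : ℕ, t + 1 < r → d + (t + 1 : ℕ) ≠ d := fun t ht h => by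
    rw [add_eq_left, ZMod.natCast_eq_zero_iff] at h
    exact absurd (Nat.le_of_dvd t.succ_pos h) (by omega)
  have hstep : ∀ t : ℕ, t + 1 < r → ℓ (g (d + (t + 1 : ℕ))) = ℓ (g (d + 1)) := by
    intro t
    induction t with
    | zero => simp
    | succ t ih =>
      intro ht
      have hadj := hcycle (d + (t + 1 : ℕ))
      rw [add_assoc, ← Nat.cast_succ] at hadj
      rw [← ih (by omega)]
      exact (hℓ _ (hd _ (hne t (by omega))) _ (hd _ (hne (t + 1) ht)) hadj).symm
  intro i hi
  obtain ⟨t, ht⟩ : ∃ t, (i - d).val = t + 1 :=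
    Nat.exists_eq_succ_of_ne_zero fun h => hi (sub_eq_zero.1 ((ZMod.val_eq_zero _).1 h))
  have := hstep t (ht ▸ (i - d).val_lt)
  rwa [← ht, ZMod.natCast_zmod_val, add_sub_cancel] at this

-- A hub in `S` has fewer than `k` neighbours in `S`, which cannot break up a rim of length `2k`;
-- a hub outside `S` forces a path of `2k - 1` rim vertices inside a single class of `ℓ`.
theorem not_containsCopy_wheelGraph {ι : Type*} [DecidableEq ι] {ℓ : V → ι} (hk : 2 ≤ k)
    (hdeg : ∀ v ∈ S, degreeIn G S v < k) (hℓ : ∀ u ∈ S, ∀ v ∈ S, G.Adj u v → ℓ u = ℓ v)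
    (hclass : ∀ x, #{v ∈ S | ℓ v = x} + 1 < 2 * k)
    (hS : ∀ u ∉ S, ∀ v ∉ S, G.Adj u v → s(u, v) = e) :
    ¬ ContainsCopy (wheelGraph (2 * k + 1)) G := by
  classical
  intro hcopy
  have : NeZero (2 * k) := ⟨by omega⟩
  obtain ⟨c, g, hg, hhub, hcycle⟩ := exists_rim_of_containsCopy (by omega) hcopy
  by_cases hc : c ∈ S
  · have hrim := le_card_rim_mem (by omega) hg hcycle hS
    have hle : #{i | g i ∈ S} ≤ degreeIn G S c :=
      card_le_card_of_injOn g (fun i hi => by simpa [hhub] using hi) hg.injOn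
    have := hdeg c hc
    omega
  · obtain ⟨d, hd⟩ := exists_forall_ne_rim_mem hg hhub hc hS
    have hlabel := label_rim_eq hcycle hℓ hd
    have hle : #(univ.erase d) ≤ #{v ∈ S | ℓ v = ℓ (g (d + 1))} :=
      card_le_card_of_injOn g (fun i hi => by
        have hid : i ≠ d := by simpa using hi
        simp [hd i hid, hlabel i hid]) hg.injOn
    rw [card_erase_of_mem (mem_univ d), card_univ, ZMod.card] at hle
    have := hclass (ℓ (g (d + 1)))
    omega

end WheelFree

section Blocks

variable {k : ℕ}

open scoped Classical in
/-- There is a `(k - 1)`-regular graph on `c` vertices that is a disjoint union of blocks, the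
fibres of a labelling of the vertices, of size at most `2 * k - 2`. -/
def IsBlockRegular (k c : ℕ) : Prop :=
  ∃ (W ι : Type) (_ : Fintype W) (R : SimpleGraph W) (ℓ : W → ι), Fintype.card W = c ∧
    (∀ v, degreeIn R univ v + 1 = k) ∧ (∀ u v, R.Adj u v → ℓ u = ℓ v) ∧
    ∀ x, #{v | ℓ v = x} + 1 < 2 * k

lemma isBlockRegular_of_single_block {c : ℕ} (R : SimpleGraph (Fin c)) (hc : c + 1 < 2 * k)
    (hR : ∀ v, degreeIn R univ v + 1 = k) : IsBlockRegular k c :=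
  ⟨Fin c, Unit, inferInstance, R, fun _ => (), by simp, hR, fun _ _ _ => rfl,
    fun _ => by simpa using hc⟩

lemma isBlockRegular_self (hk : 2 ≤ k) : IsBlockRegular k k :=
  isBlockRegular_of_single_block ⊤ (by omega) fun _ => by
    simp only [degreeIn_univ_eq_degree, SimpleGraph.complete_graph_degree, Fintype.card_fin]
    omega

lemma isBlockRegular_add_two (hk : 4 ≤ k) : IsBlockRegular k (k + 2) := by
  obtain ⟨m, rfl⟩ : ∃ m, k = m + 1 := ⟨k - 1, by omega⟩
  refine isBlockRegular_of_single_block (SimpleGraph.cycleGraph (m + 3))ᶜ (by omega) fun v => ?_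
  rw [degreeIn_univ_eq_degree, SimpleGraph.degree_compl, SimpleGraph.cycleGraph_degree_three_le]
  simp

lemma isBlockRegular_zero (hk : 1 ≤ k) : IsBlockRegular k 0 :=
  isBlockRegular_of_single_block ⊤ (by omega) fun v => v.elim0

lemma IsBlockRegular.add {a b : ℕ} (ha : IsBlockRegular k a) (hb : IsBlockRegular k b) :
    IsBlockRegular k (a + b) := by
  obtain ⟨W₁, ι₁, _, R₁, ℓ₁, hcard₁, hR₁, hℓ₁, hblock₁⟩ := ha
  obtain ⟨W₂, ι₂, _, R₂, ℓ₂, hcard₂, hR₂, hℓ₂, hblock₂⟩ := hb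
  refine ⟨W₁ ⊕ W₂, ι₁ ⊕ ι₂, inferInstance, R₁ ⊕g R₂, Sum.map ℓ₁ ℓ₂, by simp [hcard₁, hcard₂],
    ?_, ?_, ?_⟩
  · rintro (v | v)
    · rw [← hR₁ v, degreeIn, degreeIn, ← card_map (Function.Embedding.inl : W₁ ↪ W₁ ⊕ W₂)]
      congr 2
      ext (x | x) <;> simp
    · rw [← hR₂ v, degreeIn, degreeIn, ← card_map (Function.Embedding.inr : W₂ ↪ W₁ ⊕ W₂)]
      congr 2
      ext (x | x) <;> simp
  · rintro (u | u) (v | v) huv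
    · simpa using hℓ₁ u v (by simpa using huv)
    · simp at huv
    · simp at huv
    · simpa using hℓ₂ u v (by simpa using huv)
  · rintro (x | x)
    · convert hblock₁ x using 2
      rw [← card_map (Function.Embedding.inl : W₁ ↪ W₁ ⊕ W₂)]
      congr 1
      ext (v | v) <;> simp
    · convert hblock₂ x using 2
      rw [← card_map (Function.Embedding.inr : W₂ ↪ W₁ ⊕ W₂)]
      congr 1
      ext (v | v) <;> simp

lemma IsBlockRegular.mul {c : ℕ} (hk : 1 ≤ k) (h : IsBlockRegular k c) (t : ℕ) :
    IsBlockRegular k (t * c) := by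
  induction t with
  | zero => simpa using isBlockRegular_zero hk
  | succ t ih => exact Nat.succ_mul t c ▸ ih.add h

-- `gcd k (k + 2)` divides `2`, and is `1` for odd `k`.
lemma isBlockRegular_of_le {a : ℕ} (hk : 4 ≤ k) (ha : k * (k + 2) ≤ a)
    (hpar : Even a ∨ Odd k) : IsBlockRegular k a := by
  have hgcd : k.gcd (k + 2) ∣ a := by
    rw [Nat.gcd_self_add_right]
    rcases hpar with heven | hodd
    · exact (Nat.gcd_dvd_right k 2).trans heven.two_dvd
    · rw [Nat.coprime_two_right.2 hodd]
      exact one_dvd a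
  obtain ⟨x, y, rfl⟩ := Nat.exists_add_mul_eq_of_gcd_dvd_of_mul_pred_le k (k + 2) a hgcd
    ((Nat.mul_le_mul (Nat.pred_le k) (Nat.pred_le (k + 2))).trans ha)
  exact ((isBlockRegular_self (by omega)).mul (by omega) x).add
    ((isBlockRegular_add_two hk).mul (by omega) y)

end Blocks

section Comparison

variable {V W : Type*} [Fintype W] {φ : W ↪ V} {R : SimpleGraph W} {p q : V} {k : ℕ}

/-- The join of a copy of `R`, embedded by `φ`, with an otherwise independent set that carries the
single edge `pq`. -/
def joinEdge (R : SimpleGraph W) (φ : W ↪ V) (p q : V) : SimpleGraph V :=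
  R.map φ ⊔ (⊤ : SimpleGraph V).between (Set.range φ) (Set.range φ)ᶜ ⊔ SimpleGraph.edge p q

lemma joinEdge_adj_apply (hp : p ∉ univ.map φ) {u v : W} :
    (joinEdge R φ p q).Adj (φ u) (φ v) ↔ R.Adj u v := by
  have hu : φ u ≠ p := fun h => hp (by simp [← h])
  have hv : φ v ≠ p := fun h => hp (by simp [← h])
  simp [joinEdge, SimpleGraph.between_adj, SimpleGraph.edge_adj, hu, hv]

lemma joinEdge_adj_of_mem_of_notMem {u v : V} (hu : u ∈ univ.map φ) (hv : v ∉ univ.map φ) :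
    (joinEdge R φ p q).Adj u v := by
  have huv : u ≠ v := fun h => hv (h ▸ hu)
  simp only [mem_map, mem_univ, true_and] at hu hv
  simp only [joinEdge, SimpleGraph.sup_adj, SimpleGraph.between_adj]
  exact .inl (.inr ⟨huv, .inl ⟨hu, hv⟩⟩)

lemma joinEdge_adj_of_notMem (hpq : p ≠ q) {u v : V} (hu : u ∉ univ.map φ)
    (hv : v ∉ univ.map φ) : (joinEdge R φ p q).Adj u v ↔ s(u, v) = s(p, q) := by
  simp only [mem_map, mem_univ, true_and, not_exists] at hu hv
  simp only [joinEdge, SimpleGraph.sup_adj, SimpleGraph.map_adj, SimpleGraph.between_adj,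
    SimpleGraph.edge_adj, Set.mem_range, Set.mem_compl_iff, hu, hv, Sym2.eq_iff]
  grind

lemma degreeIn_joinEdge_map (hp : p ∉ univ.map φ) (w : W) :
    degreeIn (joinEdge R φ p q) (univ.map φ) (φ w) = degreeIn R univ w := by
  rw [degreeIn, degreeIn, ← card_map φ]
  congr 1
  ext x
  simp only [mem_nbhdIn, mem_map, mem_univ, true_and]
  constructor
  · rintro ⟨⟨y, rfl⟩, hy⟩
    exact ⟨y, (joinEdge_adj_apply hp).1 hy, rfl⟩
  · rintro ⟨y, hy, rfl⟩
    exact ⟨⟨y, rfl⟩, (joinEdge_adj_apply hp).2 hy⟩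

variable [Fintype V] [DecidableEq V]

lemma degreeIn_joinEdge_compl {v : V} (hv : v ∈ univ.map φ) :
    degreeIn (joinEdge R φ p q) (univ.map φ)ᶜ v = #(univ.map φ)ᶜ :=
  congr_arg card (Subset.antisymm nbhdIn_subset fun _ hu =>
    mem_nbhdIn.2 ⟨hu, joinEdge_adj_of_mem_of_notMem hv (mem_compl.1 hu)⟩)

lemma sum_degreeIn_joinEdge (hpq : p ≠ q) (hp : p ∉ univ.map φ) (hq : q ∉ univ.map φ) :
    ∑ v ∈ (univ.map φ)ᶜ, degreeIn (joinEdge R φ p q) (univ.map φ)ᶜ v = 2 := by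
  have hnbhd : ∀ {v : V}, v ∉ univ.map φ → ∀ {u},
      u ∈ nbhdIn (joinEdge R φ p q) (univ.map φ)ᶜ v ↔ u ∉ univ.map φ ∧ s(v, u) = s(p, q) := by
    intro v hv u
    rw [mem_nbhdIn, mem_compl]
    exact and_congr_right fun hu => joinEdge_adj_of_notMem hpq hv hu
  rw [sum_eq_add_of_mem p q (mem_compl.2 hp) (mem_compl.2 hq) hpq fun v hv hne => ?_]
  · have hp' : nbhdIn (joinEdge R φ p q) (univ.map φ)ᶜ p = {q} := by
      ext u
      rw [hnbhd hp, mem_singleton, Sym2.congr_right, and_iff_right_of_imp]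
      exact fun h => h ▸ hq
    have hq' : nbhdIn (joinEdge R φ p q) (univ.map φ)ᶜ q = {p} := by
      ext u
      rw [hnbhd hq, mem_singleton, Sym2.eq_swap (a := p), Sym2.congr_right, and_iff_right_of_imp]
      exact fun h => h ▸ hp
    simp [degreeIn, hp', hq']
  · refine card_eq_zero.2 (eq_empty_of_forall_notMem fun u hu => ?_)
    have := ((hnbhd (mem_compl.1 hv)).1 hu).2
    rw [Sym2.eq_iff] at this
    tauto

end Comparison

theorem exists_wheelFree_join {k n a : ℕ} (hk : 4 ≤ k) (ha : k * (k + 2) ≤ a) (hn : a + 2 ≤ n)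
    (hpar : Even a ∨ Odd k) : ∃ (H : SimpleGraph (Fin n)) (S : Finset (Fin n)),
      WheelFree (2 * k + 1) H ∧ #S = a ∧ (∀ v ∈ S, degreeIn H S v + 1 = k) ∧
      (∀ v ∈ S, degreeIn H Sᶜ v = #Sᶜ) ∧ ∑ v ∈ Sᶜ, degreeIn H Sᶜ v = 2 := by
  classical
  obtain ⟨W, ι, _, R, ℓ, hcard, hR, hℓ, hblock⟩ := isBlockRegular_of_le hk ha hpar
  obtain ⟨φ⟩ : Nonempty (W ↪ Fin n) :=
    Function.Embedding.nonempty_of_card_le (by rw [hcard, Fintype.card_fin]; omega)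
  have hS : #(univ.map φ) = a := by rw [card_map, card_univ, hcard]
  obtain ⟨p, hp, q, hq, hpq⟩ := one_lt_card.1 (show 1 < #(univ.map φ)ᶜ by
    rw [card_compl, Fintype.card_fin, hS]; omega)
  rw [mem_compl] at hp hq
  have hdeg : ∀ v ∈ univ.map φ, degreeIn (joinEdge R φ p q) (univ.map φ) v + 1 = k := by
    intro v hv
    obtain ⟨w, -, rfl⟩ := mem_map.1 hv
    rw [degreeIn_joinEdge_map hp, hR]
  refine ⟨joinEdge R φ p q, univ.map φ, ?_, hS, hdeg, fun v => degreeIn_joinEdge_compl,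
    sum_degreeIn_joinEdge hpq hp hq⟩
  have hext : ∀ w, Function.extend φ (some ∘ ℓ) (fun _ => none) (φ w) = some (ℓ w) :=
    φ.injective.extend_apply _ _
  refine not_containsCopy_wheelGraph (S := univ.map φ) (e := s(p, q))
    (ℓ := Function.extend φ (some ∘ ℓ) fun _ => none) (by omega)
    (fun v hv => by have := hdeg v hv; omega) (fun u hu v hv huv => ?_) (fun x => ?_)
    fun u hu v hv => (joinEdge_adj_of_notMem hpq hu hv).1
  · obtain ⟨u, -, rfl⟩ := mem_map.1 hu
    obtain ⟨v, -, rfl⟩ := mem_map.1 hv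
    rw [hext, hext, hℓ u v ((joinEdge_adj_apply hp).1 huv)]
  · rw [filter_map, card_map]
    cases x with
    | none => simp [hext]; omega
    | some x => simpa [hext] using hblock x

section Perron

open Matrix
open scoped Pointwise

variable {V : Type*} [Fintype V] [DecidableEq V] {A : Matrix V V ℝ} {μ : ℝ}

lemma posSemidef_algebraMap_sub (hA : A.IsHermitian) (hμ : μ ∈ upperBounds (spectrum ℝ A)) :
    (algebraMap ℝ (Matrix V V ℝ) μ - A).PosSemidef := by
  rw [posSemidef_iff_isHermitian_and_spectrum_nonneg, ← spectrum.singleton_sub_eq]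
  refine ⟨.sub (by simp [IsHermitian, algebraMap_eq_diagonal]) hA, ?_⟩
  rintro _ ⟨_, rfl, ν, hν, rfl⟩
  exact sub_nonneg.2 (hμ hν)

lemma algebraMap_sub_mulVec (A : Matrix V V ℝ) (μ : ℝ) (x : V → ℝ) :
    (algebraMap ℝ (Matrix V V ℝ) μ - A) *ᵥ x = μ • x - A *ᵥ x := by
  rw [sub_mulVec, Algebra.algebraMap_eq_smul_one, smul_mulVec, one_mulVec]

lemma dotProduct_mulVec_le (hA : A.IsHermitian) (hμ : μ ∈ upperBounds (spectrum ℝ A))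
    (x : V → ℝ) : x ⬝ᵥ A *ᵥ x ≤ μ * (x ⬝ᵥ x) := by
  have := (posSemidef_algebraMap_sub hA hμ).dotProduct_mulVec_nonneg x
  rwa [star_trivial, algebraMap_sub_mulVec, dotProduct_sub, dotProduct_smul, smul_eq_mul,
    sub_nonneg] at this

-- `|x|` attains the maximum of the quadratic form of `A` when the eigenvector `x` does.
theorem exists_nonneg_mulVec_eq_smul (hA : A.IsHermitian) (hnonneg : ∀ i j, 0 ≤ A i j)
    (hμ : IsGreatest (spectrum ℝ A) μ) : ∃ x : V → ℝ, 0 ≤ x ∧ x ≠ 0 ∧ A *ᵥ x = μ • x := by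
  obtain ⟨x, hx⟩ := (Module.End.hasEigenvalue_iff_mem_spectrum.2
    ((spectrum_toLin' A).symm ▸ hμ.1)).exists_hasEigenvector
  have hmax : μ * (x ⬝ᵥ x) = x ⬝ᵥ A *ᵥ x := by
    rw [← toLin'_apply, hx.apply_eq_smul, dotProduct_smul, smul_eq_mul]
  have habs : |x| ⬝ᵥ |x| = x ⬝ᵥ x := sum_congr rfl fun i _ => abs_mul_abs_self (x i)
  have hle : x ⬝ᵥ A *ᵥ x ≤ |x| ⬝ᵥ A *ᵥ |x| := by
    simp only [dotProduct, mulVec, mul_sum]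
    refine sum_le_sum fun i _ => sum_le_sum fun j _ => ?_
    rw [mul_left_comm, mul_left_comm (|x| i), Pi.abs_apply, Pi.abs_apply, ← abs_mul]
    exact mul_le_mul_of_nonneg_left (le_abs_self _) (hnonneg i j)
  have hzero : |x| ⬝ᵥ (algebraMap ℝ (Matrix V V ℝ) μ - A) *ᵥ |x| = 0 := by
    have := dotProduct_mulVec_le hA hμ.2 |x|
    rw [algebraMap_sub_mulVec, dotProduct_sub, dotProduct_smul, smul_eq_mul]
    linarith [habs ▸ hmax]
  have hker := ((posSemidef_algebraMap_sub hA hμ.2).dotProduct_mulVec_zero_iff |x|).1 hzero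
  refine ⟨|x|, abs_nonneg x, by simpa using hx.2, ?_⟩
  exact (sub_eq_zero.1 ((algebraMap_sub_mulVec A μ |x|).symm.trans hker)).symm

end Perron

section SpectralRadius

open Matrix

/-- A nonnegative eigenvector of the adjacency matrix of `G`, normalized to have maximal
entry `1`. -/
structure IsPerronVector {V : Type*} [Fintype V] (G : SimpleGraph V) (lam : ℝ) (x : V → ℝ) :
    Prop where
  nonneg : ∀ v, 0 ≤ x v
  le_one : ∀ v, x v ≤ 1
  exists_eq_one : ∃ v, x v = 1
  sum_nbhdIn : ∀ v, ∑ u ∈ nbhdIn G univ v, x u = lam * x v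

variable {n : ℕ}

lemma isGreatest_lam1 [NeZero n] (G : SimpleGraph (Fin n)) [DecidableRel G.Adj] :
    IsGreatest (spectrum ℝ (G.adjMatrix ℝ)) (lam1 G) := by
  have hset : {μ : ℝ | Module.End.HasEigenvalue (Matrix.toLin' (G.adjMatrix ℝ)) μ} =
      spectrum ℝ (G.adjMatrix ℝ) := by
    ext μ
    rw [Set.mem_ofPred_eq, Module.End.hasEigenvalue_iff_mem_spectrum, spectrum_toLin']
  have hne : (spectrum ℝ (G.adjMatrix ℝ)).Nonempty := by
    rw [(G.isHermitian_adjMatrix ℝ).spectrum_real_eq_range_eigenvalues]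
    exact Set.range_nonempty _
  have hfin : (spectrum ℝ (G.adjMatrix ℝ)).Finite := Matrix.finite_real_spectrum
  have hlam : lam1 G = sSup (spectrum ℝ (G.adjMatrix ℝ)) := by
    rw [lam1, ← hset]
    congr!
  rw [hlam]
  exact ⟨hne.csSup_mem hfin, fun μ hμ => le_csSup hfin.bddAbove hμ⟩

lemma adjMatrix_mulVec_eq_sum_nbhdIn (G : SimpleGraph (Fin n)) [DecidableRel G.Adj]
    (x : Fin n → ℝ) (v : Fin n) : (G.adjMatrix ℝ *ᵥ x) v = ∑ u ∈ nbhdIn G univ v, x u := by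
  rw [SimpleGraph.adjMatrix_mulVec_apply]
  exact sum_congr (by ext; simp) fun _ _ => rfl

lemma two_mul_edgeCount_le_lam1_mul [NeZero n] (G : SimpleGraph (Fin n)) :
    2 * (edgeCount G : ℝ) ≤ lam1 G * n := by
  classical
  have h := dotProduct_mulVec_le (G.isHermitian_adjMatrix ℝ) (isGreatest_lam1 G).2 1
  have hsum : 2 * (edgeCount G : ℝ) = ∑ v, (degreeIn G univ v : ℝ) := by
    exact_mod_cast (sum_degreeIn_univ G).symm
  rw [hsum]
  simpa only [dotProduct, adjMatrix_mulVec_eq_sum_nbhdIn, Pi.one_apply, one_mul, mul_one,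
    sum_const, nsmul_eq_mul, card_univ, Fintype.card_fin, degreeIn] using h

theorem exists_isPerronVector [NeZero n] (G : SimpleGraph (Fin n)) :
    ∃ x, IsPerronVector G (lam1 G) x := by
  classical
  obtain ⟨x, hx, hx0, heig⟩ := exists_nonneg_mulVec_eq_smul (G.isHermitian_adjMatrix ℝ)
    (fun i j => by rw [SimpleGraph.adjMatrix_apply]; split_ifs <;> norm_num) (isGreatest_lam1 G)
  obtain ⟨v, -, hv⟩ := exists_max_image univ x univ_nonempty
  have hpos : 0 < x v := (hx v).lt_of_ne fun h =>
    hx0 (funext fun u => ((hv u (mem_univ u)).trans h.ge).antisymm (hx u))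
  refine ⟨fun u => x u / x v, fun u => div_nonneg (hx u) hpos.le,
    fun u => (div_le_one hpos).2 (hv u (mem_univ u)), ⟨v, div_self hpos.ne'⟩, fun u => ?_⟩
  rw [← sum_div, ← adjMatrix_mulVec_eq_sum_nbhdIn, heig, Pi.smul_apply, smul_eq_mul,
    mul_div_assoc]

end SpectralRadius

section NearJoin

/-- `G` is, up to defects bounded by `C`, the join of a `K`-regular graph on `S` with an empty
graph on the complement, where the two parts are nearly of equal size. -/
structure IsNearJoin {V : Type*} [Fintype V] [DecidableEq V] (G : SimpleGraph V) (S : Finset V)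
    (K C : ℕ) : Prop where
  degreeIn_le : ∀ v ∈ S, degreeIn G S v ≤ K
  mul_card_le : K * #S ≤ ∑ v ∈ S, degreeIn G S v + C
  card_mul_card_le : #S * #Sᶜ ≤ ∑ v ∈ S, degreeIn G Sᶜ v + C
  sum_compl_le : ∑ v ∈ Sᶜ, degreeIn G Sᶜ v ≤ 2
  card_le : #S ≤ #Sᶜ + C
  card_compl_le : #Sᶜ ≤ #S + C

variable {V : Type*} {G : SimpleGraph V} {S X Y : Finset V} {K C : ℕ} {lam : ℝ} {x : V → ℝ}

lemma sum_sum_nbhdIn (G : SimpleGraph V) (X Y : Finset V) (x : V → ℝ) :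
    ∑ v ∈ X, ∑ u ∈ nbhdIn G Y v, x u = ∑ u ∈ Y, (degreeIn G X u : ℝ) * x u := by
  rw [sum_comm' (s' := fun u => nbhdIn G X u) (t' := Y)]
  · exact sum_congr rfl fun u _ => by rw [sum_const, nsmul_eq_mul, degreeIn]
  · intro v u
    rw [mem_nbhdIn, mem_nbhdIn, G.adj_comm]
    tauto

lemma sum_nbhdIn_le_degreeIn (hx : ∀ v, x v ≤ 1) (v : V) :
    ∑ u ∈ nbhdIn G Y v, x u ≤ degreeIn G Y v := by
  rw [degreeIn, card_eq_sum_ones, Nat.cast_sum, Nat.cast_one]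
  exact sum_le_sum fun u _ => hx u

lemma sum_sub_le_sum_nbhdIn (hx : ∀ v, x v ≤ 1) (v : V) :
    ∑ u ∈ Y, x u - (#Y - degreeIn G Y v) ≤ ∑ u ∈ nbhdIn G Y v, x u := by
  have hsub := nbhdIn_subset (G := G) (X := Y) (v := v)
  have := sum_le_sum_of_subset_of_nonneg hsub fun u _ _ => sub_nonneg.2 (hx u)
  simp only [sum_sub_distrib, sum_const, nsmul_eq_mul, mul_one] at this
  rw [degreeIn]
  linarith

lemma card_sub_two_mul_le_sum {q : ℝ} (hlam : 0 < lam) (hq : 0 ≤ q) (hY : (#Y : ℝ) ≤ 2 * lam)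
    (h : ∀ v ∈ Y, lam - q ≤ lam * x v) : (#Y : ℝ) - 2 * q ≤ ∑ v ∈ Y, x v := by
  have hsum : #Y * (lam - q) ≤ lam * ∑ v ∈ Y, x v := by
    rw [mul_sum, ← nsmul_eq_mul]
    exact card_nsmul_le_sum Y _ _ h
  refine le_of_mul_le_mul_left ?_ hlam
  linarith [mul_le_mul_of_nonneg_right hY hq]

lemma abs_sum_mul_le {w f : V → ℝ} {c : ℝ} (hw : ∀ v ∈ Y, 0 ≤ w v) (hf : ∀ v ∈ Y, |f v| ≤ c) :
    |∑ v ∈ Y, w v * f v| ≤ c * ∑ v ∈ Y, w v := by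
  rw [mul_sum]
  refine (abs_sum_le_sum_abs _ _).trans (sum_le_sum fun v hv => ?_)
  rw [abs_mul, abs_of_nonneg (hw v hv), mul_comm]
  exact mul_le_mul_of_nonneg_right (hf v hv) (hw v hv)

lemma sum_sub_mul_mul_sub (f x : V → ℝ) (Y : Finset V) (c t s : ℝ) :
    ∑ v ∈ Y, (c - f v) * (t * x v - s) =
      t * (c * ∑ v ∈ Y, x v - ∑ v ∈ Y, f v * x v) - s * (c * #Y - ∑ v ∈ Y, f v) := by
  simp only [sub_mul, mul_sub, sum_sub_distrib, sum_const, nsmul_eq_mul, mul_sum]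
  simp only [mul_left_comm _ t, mul_comm _ s]
  ring

variable [Fintype V] [DecidableEq V]

lemma IsPerronVector.mul_eq (hx : IsPerronVector G lam x) (S : Finset V) (v : V) :
    lam * x v = ∑ u ∈ nbhdIn G S v, x u + ∑ u ∈ nbhdIn G Sᶜ v, x u := by
  rw [← hx.sum_nbhdIn, ← sum_inter_add_sum_sdiff _ S]
  congr 2 <;> ext <;> simp [and_comm]

lemma IsPerronVector.mul_sum_eq (hx : IsPerronVector G lam x) (S Y : Finset V) :
    lam * ∑ v ∈ Y, x v =
      ∑ v ∈ S, (degreeIn G Y v : ℝ) * x v + ∑ v ∈ Sᶜ, (degreeIn G Y v : ℝ) * x v := by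
  rw [← sum_sum_nbhdIn, ← sum_sum_nbhdIn, ← sum_add_distrib, mul_sum]
  exact sum_congr rfl fun v _ => hx.mul_eq S v

-- `λ ^ 2 * ∑_S x` counts weighted walks of length two ending in `S`; the identity compares it with
-- the exact join and collects all deviations into sums weighted by the defects.
lemma IsPerronVector.sq_sub_mul_sum_eq (hx : IsPerronVector G lam x) (S : Finset V) (K : ℝ)
    {σ : ℝ} (hσ : σ = ∑ v ∈ S, x v) :
    (lam ^ 2 - K * lam - (2 * edgeCount G - K * #S - #S * #Sᶜ)) * σ =
      ∑ v ∈ Sᶜ, (degreeIn G Sᶜ v : ℝ) * (#S * x v - σ) -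
        ∑ v ∈ S, ((#Sᶜ : ℝ) - degreeIn G Sᶜ v) * (#S * x v - σ) -
        ∑ v ∈ S, (K - degreeIn G S v) * (lam * x v - σ) -
        ∑ v ∈ Sᶜ, ((#S : ℝ) - degreeIn G S v) * (lam * x v - σ) := by
  have hedge : 2 * (edgeCount G : ℝ) = ∑ v ∈ S, (degreeIn G S v : ℝ) +
      ∑ v ∈ Sᶜ, (degreeIn G Sᶜ v : ℝ) + 2 * ∑ v ∈ S, (degreeIn G Sᶜ v : ℝ) := by
    exact_mod_cast two_mul_edgeCount G S
  have hcross : ∑ v ∈ S, (degreeIn G Sᶜ v : ℝ) = ∑ v ∈ Sᶜ, (degreeIn G S v : ℝ) := by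
    exact_mod_cast sum_degreeIn_comm G S Sᶜ
  have hS := hx.mul_sum_eq S S
  have hT := hx.mul_sum_eq S Sᶜ
  have hE := sum_sub_mul_mul_sub (fun v => (degreeIn G Sᶜ v : ℝ)) x Sᶜ 0 #S σ
  simp only [zero_sub, neg_mul, zero_mul, sum_neg_distrib] at hE
  rw [sum_sub_mul_mul_sub, sum_sub_mul_mul_sub, sum_sub_mul_mul_sub, ← hσ]
  rw [← hσ] at hS
  linear_combination hE - σ * hedge + lam * hS + #S * hT - σ * hcross

end NearJoin

section SpectralEstimate

variable {V : Type*} [Fintype V] [DecidableEq V] {G : SimpleGraph V} {S P Q : Finset V}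
  {K C : ℕ} {lam D : ℝ} {x : V → ℝ}

lemma IsNearJoin.missing_le (h : IsNearJoin G S K C) : missing G S Sᶜ ≤ C := by
  have := h.card_mul_card_le
  rw [missing_eq_sub, sub_le_iff_le_add']
  exact_mod_cast this

lemma IsNearJoin.sum_sub_degreeIn_le (h : IsNearJoin G S K C) :
    ∑ v ∈ S, ((K : ℝ) - degreeIn G S v) ≤ C := by
  have := h.mul_card_le
  rw [sum_sub_distrib, sum_const, nsmul_eq_mul, mul_comm, sub_le_iff_le_add']
  exact_mod_cast this

lemma IsNearJoin.abs_sub_sum_compl_le (h : IsNearJoin G S K C) (hx : IsPerronVector G lam x)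
    {v : V} (hv : v ∈ S) : |lam * x v - ∑ u ∈ Sᶜ, x u| ≤ K + 2 + C := by
  have hsplit := hx.mul_eq S v
  have hS0 : 0 ≤ ∑ u ∈ nbhdIn G S v, x u := sum_nonneg fun u _ => hx.nonneg u
  have hSK : ∑ u ∈ nbhdIn G S v, x u ≤ degreeIn G S v := sum_nbhdIn_le_degreeIn hx.le_one v
  have hT : ∑ u ∈ nbhdIn G Sᶜ v, x u ≤ ∑ u ∈ Sᶜ, x u :=
    sum_le_sum_of_subset_of_nonneg nbhdIn_subset fun u _ _ => hx.nonneg u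
  have hTC := sum_sub_le_sum_nbhdIn (G := G) (Y := Sᶜ) hx.le_one v
  have hdef := (sub_degreeIn_le_missing (G := G) (B := Sᶜ) hv).trans h.missing_le
  have hdeg : (degreeIn G S v : ℝ) ≤ K := by exact_mod_cast h.degreeIn_le v hv
  rw [abs_le]
  constructor <;> linarith [K.cast_nonneg (α := ℝ), C.cast_nonneg (α := ℝ)]

lemma IsNearJoin.abs_sub_sum_le (h : IsNearJoin G S K C) (hx : IsPerronVector G lam x)
    {v : V} (hv : v ∈ Sᶜ) : |lam * x v - ∑ u ∈ S, x u| ≤ K + 2 + C := by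
  have hsplit := hx.mul_eq S v
  have hT0 : 0 ≤ ∑ u ∈ nbhdIn G Sᶜ v, x u := sum_nonneg fun u _ => hx.nonneg u
  have hT2 : ∑ u ∈ nbhdIn G Sᶜ v, x u ≤ degreeIn G Sᶜ v := sum_nbhdIn_le_degreeIn hx.le_one v
  have hS : ∑ u ∈ nbhdIn G S v, x u ≤ ∑ u ∈ S, x u :=
    sum_le_sum_of_subset_of_nonneg nbhdIn_subset fun u _ _ => hx.nonneg u
  have hSC := sum_sub_le_sum_nbhdIn (G := G) (Y := S) hx.le_one v
  have hdef := (sub_degreeIn_le_missing (G := G) (B := S) hv).trans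
    ((missing_comm G Sᶜ S).trans_le h.missing_le)
  have hdeg : (degreeIn G Sᶜ v : ℝ) ≤ 2 := by
    exact_mod_cast (single_le_sum_of_canonicallyOrdered hv).trans h.sum_compl_le
  rw [abs_le]
  constructor <;> linarith [K.cast_nonneg (α := ℝ), C.cast_nonneg (α := ℝ)]

lemma IsPerronVector.sub_le_mul_of_mem (hx : IsPerronVector G lam x) (hlam : 0 < lam)
    (hD : 0 ≤ D) (hP : ∀ v ∈ P, |lam * x v - ∑ u ∈ Q, x u| ≤ D)
    (hQ : ∀ v ∈ Q, |lam * x v - ∑ u ∈ P, x u| ≤ D) (hQP : (#Q : ℝ) ≤ #P + D)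
    (hcard : (#P : ℝ) ≤ 2 * lam) {v₀ : V} (hv₀ : v₀ ∈ P) (hone : x v₀ = 1) :
    lam ≤ #Q + D ∧ ∀ v ∈ P ∪ Q, lam - 7 * D ≤ lam * x v := by
  have hmax := (abs_le.1 (hP v₀ hv₀)).2
  rw [hone, mul_one] at hmax
  have hsumQ : ∑ u ∈ Q, x u ≤ #Q := by
    simpa using sum_le_sum fun u (_ : u ∈ Q) => hx.le_one u
  have hlowP : ∀ v ∈ P, lam - 2 * D ≤ lam * x v := fun v hv => by
    linarith [(abs_le.1 (hP v hv)).1]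
  have hsumP := card_sub_two_mul_le_sum hlam (mul_nonneg zero_le_two hD) hcard hlowP
  refine ⟨by linarith, fun v hv => ?_⟩
  rcases mem_union.1 hv with hv | hv
  · linarith [hlowP v hv]
  · linarith [(abs_le.1 (hQ v hv)).1]

lemma IsNearJoin.le_card_add_and_sub_le_mul (h : IsNearJoin G S K C)
    (hx : IsPerronVector G lam x) (hlam : (Fintype.card V : ℝ) ≤ 2 * lam) (hpos : 0 < lam)
    (hD : D = K + 2 + C) :
    lam ≤ #S + 2 * D ∧ ∀ v, lam - 7 * D ≤ lam * x v := by
  have hST : (#S : ℝ) + #Sᶜ = Fintype.card V := by exact_mod_cast card_add_card_compl S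
  have hab : (#S : ℝ) ≤ #Sᶜ + C := by exact_mod_cast h.card_le
  have hba : (#Sᶜ : ℝ) ≤ #S + C := by exact_mod_cast h.card_compl_le
  have hCD : (C : ℝ) ≤ D := by rw [hD]; linarith [K.cast_nonneg (α := ℝ)]
  have hD0 : 0 ≤ D := C.cast_nonneg.trans hCD
  have hS : ∀ v ∈ S, |lam * x v - ∑ u ∈ Sᶜ, x u| ≤ D := fun v hv =>
    hD ▸ h.abs_sub_sum_compl_le hx hv
  have hT : ∀ v ∈ Sᶜ, |lam * x v - ∑ u ∈ S, x u| ≤ D := fun v hv =>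
    hD ▸ h.abs_sub_sum_le hx hv
  obtain ⟨v₀, hv₀⟩ := hx.exists_eq_one
  by_cases hmem : v₀ ∈ S
  · obtain ⟨hle, hlow⟩ := hx.sub_le_mul_of_mem hpos hD0 hS hT (by linarith)
      (by linarith [(#Sᶜ).cast_nonneg (α := ℝ)]) hmem hv₀
    exact ⟨by linarith, fun v => hlow v (by simp)⟩
  · obtain ⟨hle, hlow⟩ := hx.sub_le_mul_of_mem hpos hD0 hT hS (by linarith)
      (by linarith [(#S).cast_nonneg (α := ℝ)]) (mem_compl.2 hmem) hv₀
    exact ⟨by linarith, fun v => hlow v (by simp [em'])⟩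

lemma IsNearJoin.perron_bounds (h : IsNearJoin G S K C)
    (hx : IsPerronVector G lam x) (hlam : (Fintype.card V : ℝ) ≤ 2 * lam) (hpos : 0 < lam)
    (hD : D = K + 2 + C) :
    #S - 14 * D ≤ ∑ u ∈ S, x u ∧ ∀ v, |lam * x v - ∑ u ∈ S, x u| ≤ 16 * D ∧
      |#S * x v - ∑ u ∈ S, x u| ≤ 16 * D := by
  obtain ⟨hle, hlow⟩ := h.le_card_add_and_sub_le_mul hx hlam hpos hD
  have hST : (#S : ℝ) + #Sᶜ = Fintype.card V := by exact_mod_cast card_add_card_compl S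
  have hab : (#S : ℝ) ≤ #Sᶜ + C := by exact_mod_cast h.card_le
  have hCD : (C : ℝ) ≤ D := by rw [hD]; linarith [K.cast_nonneg (α := ℝ)]
  have hD0 : 0 ≤ D := C.cast_nonneg.trans hCD
  have hcard : (#S : ℝ) ≤ 2 * lam := by linarith [(#Sᶜ).cast_nonneg (α := ℝ)]
  have hsum := card_sub_two_mul_le_sum (Y := S) hpos (by linarith : 0 ≤ 7 * D) hcard
    fun v _ => hlow v
  have hsum' : ∑ u ∈ S, x u ≤ #S := by
    simpa using sum_le_sum fun u (_ : u ∈ S) => hx.le_one u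
  refine ⟨by linarith, fun v => ⟨?_, ?_⟩⟩
  · have := mul_le_of_le_one_right hpos.le (hx.le_one v)
    rw [abs_le]
    constructor <;> linarith [hlow v]
  · have hup := mul_le_of_le_one_right (#S).cast_nonneg (hx.le_one v)
    have hlowS : (#S : ℝ) - 14 * D ≤ #S * x v := by
      refine le_of_mul_le_mul_left ?_ hpos
      linarith [mul_le_mul_of_nonneg_left (hlow v) (#S).cast_nonneg,
        mul_le_mul_of_nonneg_left hcard hD0]
    rw [abs_le]
    constructor <;> linarith

lemma IsNearJoin.abs_sq_sub_mul_sum_le (h : IsNearJoin G S K C)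
    (hx : IsPerronVector G lam x) (hlam : (Fintype.card V : ℝ) ≤ 2 * lam) (hpos : 0 < lam)
    (hD : D = K + 2 + C) :
    |(lam ^ 2 - K * lam - (2 * edgeCount G - K * #S - #S * #Sᶜ)) * ∑ u ∈ S, x u| ≤
      16 * D * (2 + 3 * C) := by
  obtain ⟨-, hdev⟩ := h.perron_bounds hx hlam hpos hD
  have hD0 : 0 ≤ 16 * D := by rw [hD]; positivity
  rw [hx.sq_sub_mul_sum_eq S K rfl]
  have hTT := abs_le.1 (abs_sum_mul_le (Y := Sᶜ) (w := fun v => (degreeIn G Sᶜ v : ℝ))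
    (fun v _ => Nat.cast_nonneg _) fun v _ => (hdev v).2)
  have hSS := abs_le.1 (abs_sum_mul_le (Y := S) (w := fun v => (K : ℝ) - degreeIn G S v)
    (fun v hv => sub_nonneg.2 (by exact_mod_cast h.degreeIn_le v hv)) fun v _ => (hdev v).1)
  have hST := abs_le.1 (abs_sum_mul_le (Y := S) (w := fun v => (#Sᶜ : ℝ) - degreeIn G Sᶜ v)
    (fun v _ => sub_nonneg.2 cast_degreeIn_le_card) fun v _ => (hdev v).2)
  have hTS := abs_le.1 (abs_sum_mul_le (Y := Sᶜ) (w := fun v => (#S : ℝ) - degreeIn G S v)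
    (fun v _ => sub_nonneg.2 cast_degreeIn_le_card) fun v _ => (hdev v).1)
  have hedges : ∑ v ∈ Sᶜ, (degreeIn G Sᶜ v : ℝ) ≤ 2 := by exact_mod_cast h.sum_compl_le
  have hmiss := h.missing_le
  have hmiss' := (missing_comm G Sᶜ S).trans_le hmiss
  rw [missing] at hmiss hmiss'
  have htotal := mul_le_mul_of_nonneg_left (add_le_add (add_le_add hedges hmiss)
    (add_le_add h.sum_sub_degreeIn_le hmiss')) hD0
  rw [abs_le]
  constructor <;> linarith [hTT.1, hTT.2, hSS.1, hSS.2, hST.1, hST.2, hTS.1, hTS.2]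

/-- The order from which on the error of the spectral estimate for near joins is below `1 / 2`. -/
def spectralThreshold (K C : ℕ) : ℕ := C + (K + 2 + C) * (28 + 64 * (2 + 3 * C))

theorem IsNearJoin.abs_sq_sub_lt (h : IsNearJoin G S K C) (hx : IsPerronVector G lam x)
    (hlam : (Fintype.card V : ℝ) ≤ 2 * lam)
    (hcard : spectralThreshold K C < Fintype.card V) :
    |lam ^ 2 - K * lam - (2 * edgeCount G - K * #S - #S * #Sᶜ)| < 1 / 2 := by
  obtain ⟨D, hD⟩ : ∃ D : ℝ, D = K + 2 + C := ⟨_, rfl⟩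
  have hcard : (C : ℝ) + D * (28 + 64 * (2 + 3 * C)) < Fintype.card V := by
    rw [hD]
    exact_mod_cast hcard
  have hbound : 0 ≤ D * (2 + 3 * C) := by rw [hD]; positivity
  have hD0 : 0 ≤ D := by rw [hD]; positivity
  have hpos : 0 < lam := by linarith [C.cast_nonneg (α := ℝ), hD0]
  have hprod := h.abs_sq_sub_mul_sum_le hx hlam hpos hD
  have hsum := (h.perron_bounds hx hlam hpos hD).1
  have hST : (#S : ℝ) + #Sᶜ = Fintype.card V := by exact_mod_cast card_add_card_compl S
  have hba : (#Sᶜ : ℝ) ≤ #S + C := by exact_mod_cast h.card_compl_le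
  have hσ : 2 * (16 * D * (2 + 3 * C)) < ∑ u ∈ S, x u := by linarith
  have hσ0 : 0 < ∑ u ∈ S, x u := by linarith
  rw [abs_mul, abs_of_pos hσ0] at hprod
  by_contra! hge
  linarith [mul_le_mul_of_nonneg_right hge hσ0.le]

end SpectralEstimate

section ExtremalComparison

variable {K C n a b : ℕ}

lemma card_le_two_mul_lam1 [NeZero n] {G : SimpleGraph (Fin n)} (h : n ^ 2 ≤ 4 * edgeCount G) :
    (n : ℝ) ≤ 2 * lam1 G := by
  have hn : (0 : ℝ) < n := by exact_mod_cast NeZero.pos n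
  have hcast : (n : ℝ) ^ 2 ≤ 4 * edgeCount G := by exact_mod_cast h
  refine le_of_mul_le_mul_right ?_ hn
  linarith [two_mul_edgeCount_le_lam1_mul G]

lemma IsNearJoin.two_mul_edgeCount_le {V : Type*} [Fintype V] [DecidableEq V]
    {G : SimpleGraph V} {S : Finset V} (h : IsNearJoin G S K C) :
    2 * edgeCount G ≤ K * #S + 2 + 2 * (#S * #Sᶜ) := by
  have hS : ∑ v ∈ S, degreeIn G S v ≤ #S * K := sum_le_card_nsmul S _ K h.degreeIn_le
  have hcross : ∑ v ∈ S, degreeIn G Sᶜ v ≤ #S * #Sᶜ :=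
    sum_le_card_nsmul S _ _ fun _ _ => degreeIn_le_card
  linarith [two_mul_edgeCount G S, h.sum_compl_le]

-- Both graphs satisfy `λ ^ 2 - K λ ≈ 2 e - K |S| - |S||Sᶜ|` up to an error below `1 / 2`, and
-- `2 e - K |S|` is `2 |S||Sᶜ| + 2` for `H` and at most that for `G`.
lemma card_mul_card_compl_le_of_lam1_le {G H : SimpleGraph (Fin n)} {S X : Finset (Fin n)}
    (hG : IsNearJoin G S K C) (hH : IsNearJoin H X K C)
    (heH : 2 * edgeCount H = K * #X + 2 + 2 * (#X * #Xᶜ)) (hGn : n ^ 2 ≤ 4 * edgeCount G)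
    (hHn : n ^ 2 ≤ 4 * edgeCount H) (hn : spectralThreshold K C < n) (hle : lam1 H ≤ lam1 G) :
    #X * #Xᶜ ≤ #S * #Sᶜ := by
  have : NeZero n := ⟨by omega⟩
  obtain ⟨x, hx⟩ := exists_isPerronVector G
  obtain ⟨y, hy⟩ := exists_isPerronVector H
  have hlamG := card_le_two_mul_lam1 hGn
  have hlamH := card_le_two_mul_lam1 hHn
  have hestG := abs_lt.1 (hG.abs_sq_sub_lt hx (by simpa) (by simpa))
  have hestH := abs_lt.1 (hH.abs_sq_sub_lt hy (by simpa) (by simpa))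
  have hKn : (K : ℝ) ≤ n := by
    rw [spectralThreshold] at hn
    exact_mod_cast (by linarith [Nat.zero_le (K * C), Nat.zero_le (C * C)] : K ≤ n)
  have hmono : lam1 H ^ 2 - K * lam1 H ≤ lam1 G ^ 2 - K * lam1 G := by
    have := mul_nonneg (sub_nonneg.2 hle) (by linarith : 0 ≤ lam1 G + lam1 H - K)
    linarith
  have heG : 2 * (edgeCount G : ℝ) ≤ K * #S + 2 + 2 * (#S * #Sᶜ) := by
    exact_mod_cast hG.two_mul_edgeCount_le
  have heH : 2 * (edgeCount H : ℝ) = K * #X + 2 + 2 * (#X * #Xᶜ) := by exact_mod_cast heH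
  have hlt : (#X * #Xᶜ : ℝ) < #S * #Sᶜ + 1 := by linarith [hestG.2, hestH.1]
  exact Nat.lt_succ_iff.1 (by exact_mod_cast hlt)

lemma exists_wheelFree_isNearJoin (hK : 3 ≤ K) (hab : a + b = n) (ha : (K + 1) * (K + 3) ≤ a)
    (hb : 2 ≤ b) (hpar : Even a ∨ Odd (K + 1)) (hle : a ≤ b + C) (hge : b ≤ a + C) :
    ∃ (H : SimpleGraph (Fin n)) (S : Finset (Fin n)), WheelFree (2 * (K + 1) + 1) H ∧
      IsNearJoin H S K C ∧ #S = a ∧ #Sᶜ = b ∧ 2 * edgeCount H = K * a + 2 + 2 * (a * b) := by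
  obtain ⟨H, S, hfree, hS, hdeg, hcross, hsum⟩ :=
    exists_wheelFree_join (n := n) (Nat.succ_le_succ hK) ha (by omega) hpar
  have hSc : #Sᶜ = b := by
    have : #S + #Sᶜ = n := by simp [card_add_card_compl]
    omega
  have hdegS : ∀ v ∈ S, degreeIn H S v = K := fun v hv => Nat.succ_injective (hdeg v hv)
  have hsumS : ∑ v ∈ S, degreeIn H S v = K * a := by
    rw [sum_congr rfl hdegS, sum_const, hS, smul_eq_mul, mul_comm]
  have hsumcross : ∑ v ∈ S, degreeIn H Sᶜ v = a * b := by
    rw [sum_congr rfl hcross, sum_const, hS, hSc, smul_eq_mul]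
  refine ⟨H, S, hfree, ⟨fun v hv => (hdegS v hv).le, ?_, ?_, hsum.le, ?_, ?_⟩, hS, hSc, ?_⟩
  · rw [hsumS, hS]; exact Nat.le_add_right _ _
  · rw [hsumcross, hS, hSc]; exact Nat.le_add_right _ _
  · rwa [hS, hSc]
  · rwa [hS, hSc]
  · rw [two_mul_edgeCount H S, hsumS, hsumcross, hsum]

lemma sq_add_mul_le_four_mul_edgeCount {G : SimpleGraph (Fin n)}
    (hG : IsExWheel (2 * (K + 1) + 1) G) (hK : 3 ≤ K) (hn : 2 * ((K + 1) * (K + 3)) + 8 ≤ n) :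
    n ^ 2 + K * n ≤ 4 * edgeCount G := by
  obtain ⟨b, d, hd, hbd, heven⟩ : ∃ b d, d ≤ 3 ∧ b + d + b = n ∧ Even (b + d) := by
    rcases Nat.even_or_odd ((n + 1) / 2) with h | h
    · exact ⟨n / 2, n % 2, by omega, by omega, by grind⟩
    · exact ⟨n / 2 - 1, n % 2 + 2, by omega, by omega, by grind⟩
  obtain ⟨H, -, hfree, -, -, -, hedge⟩ := exists_wheelFree_isNearJoin (C := d) hK hbd (by omega)
    (by omega) (.inl heven) le_rfl (by omega)
  have hle := hG.2 H hfree
  have hdK : d * d ≤ K * d := Nat.mul_le_mul_right d (by omega)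
  subst hbd
  linarith

-- Comparing `4 e(G)` with `n ^ 2 + K n` bounds `(|S| - |Sᶜ|) ^ 2 - K (|S| - |Sᶜ|)` and all defects.
lemma isNearJoin_of_le_edgeCount {V : Type*} [Fintype V] [DecidableEq V] {G : SimpleGraph V}
    {S : Finset V} (hdeg : ∀ v ∈ S, degreeIn G S v ≤ K) (hsum : ∑ v ∈ Sᶜ, degreeIn G Sᶜ v ≤ 2)
    (hedge : Fintype.card V ^ 2 + K * Fintype.card V ≤ 4 * edgeCount G) :
    IsNearJoin G S K (K ^ 2 + 2 * K + 4) := by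
  have hs : ∑ v ∈ S, degreeIn G S v ≤ #S * K := sum_le_card_nsmul S _ K hdeg
  have hc : ∑ v ∈ S, degreeIn G Sᶜ v ≤ #S * #Sᶜ :=
    sum_le_card_nsmul S _ _ fun _ _ => degreeIn_le_card
  have he := two_mul_edgeCount G S
  rw [← card_add_card_compl S] at hedge
  zify at hs hc he hsum hedge
  obtain ⟨d, hd⟩ : ∃ d : ℤ, (#S : ℤ) = #Sᶜ + d := ⟨#S - #Sᶜ, by ring⟩
  rw [hd] at hs hc hedge
  have hsq : d ^ 2 ≤ K * d + 4 := by linarith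
  have hup : d ≤ K + 2 := by nlinarith [hsq]
  have hlow : -(K + 2) ≤ d := by nlinarith [hsq]
  have hKd : K * d ≤ K * (K + 2) := mul_le_mul_of_nonneg_left hup (by positivity)
  have hd2 := sq_nonneg d
  have hK2 := sq_nonneg (K : ℤ)
  refine ⟨hdeg, ?_, ?_, by exact_mod_cast hsum, ?_, ?_⟩ <;> zify <;> rw [hd] <;> linarith

lemma sq_add_le_of_le_add (hK : 1 ≤ K) (hle : a ≤ b + (K + 1)) (hge : b ≤ a + (K + 1))
    (ha : (K + 1) * (K + 1) ≤ a) : (a + b) ^ 2 ≤ 2 * (K * a + 2 + 2 * (a * b)) := by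
  have hsq : ((a : ℤ) - b) ^ 2 ≤ (K + 1) ^ 2 := sq_le_sq' (by omega) (by omega)
  zify at ha hK ⊢
  nlinarith

end ExtremalComparison

section PartSizes

lemma exists_isNearJoin_of_isExWheel {K : ℕ} (hK : 6 ≤ K) :
    ∃ N : ℕ, ∀ n ≥ N, ∀ G : SimpleGraph (Fin n), IsExWheel (2 * (K + 1) + 1) G →
      n ^ 2 + K * n ≤ 4 * edgeCount G ∧ ∃ S, IsNearJoin G S K (K ^ 2 + 2 * K + 4) := by
  obtain ⟨N, C, hstruct⟩ := exists_isAlmostJoin_sum_degreeIn_le_two (Nat.succ_le_succ hK)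
  refine ⟨max N (2 * ((K + 1) * (K + 3)) + 8), fun n hn G hG => ?_⟩
  have hedge := sq_add_mul_le_four_mul_edgeCount hG (by omega) (le_of_max_le_right hn)
  obtain ⟨S, hS, hsum⟩ := hstruct n (le_of_max_le_left hn) G hG (by linarith)
  exact ⟨hedge, S, isNearJoin_of_le_edgeCount (fun v hv => Nat.lt_succ_iff.1 (hS.degree_left v hv))
    hsum (by simpa)⟩

-- `d` is the difference of the part sizes of `G`; the competitors are the joins with part sizes
-- `a` and `b`.
theorem exists_sq_le_and_mul_sub_le {K : ℕ} (hK : 6 ≤ K) :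
    ∃ N : ℕ, ∀ n ≥ N, ∀ G : SimpleGraph (Fin n),
      IsSpexWheel (2 * (K + 1) + 1) G → IsExWheel (2 * (K + 1) + 1) G →
      ∃ d : ℤ, ∀ a b : ℕ, a + b = n → (Even a ∨ Odd (K + 1)) → |(a : ℤ) - b| ≤ K + 1 →
        d ^ 2 ≤ ((a : ℤ) - b) ^ 2 ∧ ((a : ℤ) - b) * (K - (a - b)) ≤ d * (K - d) := by
  obtain ⟨N, hnear⟩ := exists_isNearJoin_of_isExWheel hK
  set C := K ^ 2 + 2 * K + 4
  refine ⟨N + spectralThreshold K C + 2 * ((K + 1) * (K + 3)) + K + 8,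
    fun n hn G hspex hex => ?_⟩
  obtain ⟨hedge, S, hG⟩ := hnear n (by omega) G hex
  refine ⟨#S - #Sᶜ, fun a b hab hpar hbal => ?_⟩
  rw [abs_le] at hbal
  have hKK : (K + 1) * (K + 1) ≤ (K + 1) * (K + 3) := Nat.mul_le_mul_left _ (by omega)
  obtain ⟨H, X, hfree, hH, rfl, rfl, heH⟩ := exists_wheelFree_isNearJoin (C := C) (by omega) hab
    (by omega) (by omega) hpar (by omega) (by omega)
  have hHn : n ^ 2 ≤ 4 * edgeCount H := by
    have := hab ▸ sq_add_le_of_le_add (K := K) (a := #X) (b := #Xᶜ) (by omega) (by omega)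
      (by omega) (by omega)
    omega
  have hmul := card_mul_card_compl_le_of_lam1_le hG hH heH (by omega) hHn (by omega)
    (hspex.2 H hfree)
  have hedges := heH ▸ (Nat.mul_le_mul_left 2 (hex.2 H hfree)).trans hG.two_mul_edgeCount_le
  have hcard : #X + #Xᶜ = #S + #Sᶜ := by simp only [card_add_card_compl]
  zify at hmul hedges hcard
  have hsq := congr_arg (fun s : ℤ => s ^ 2) hcard
  have hKcard := congr_arg (fun s : ℤ => K * s) hcard
  constructor <;> linarith

lemma mul_sub_lt_mul_sub {K d p : ℤ} (hdp : d < p) (hK : p + d < K) :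
    d * (K - d) < p * (K - p) := by
  linarith [mul_pos (sub_pos.2 hdp) (sub_pos.2 hK)]

-- The pair `(a - b, a' - b')` is `(0, 4)`, `(-1, 3)`, `(2, 6)` or `(1, 5)` for even `k`, according
-- to `n` modulo `4`, and `(0, 4)` or `(1, 3)` for odd `k`. It is `(2, 6)` that fails for `k = 8`.
lemma exists_two_splits {k n : ℕ} (hk : k = 7 ∨ 9 ≤ k) (hn : 6 ≤ n) :
    ∃ a b a' b' : ℕ, a + b = n ∧ a' + b' = n ∧ (Even a ∨ Odd k) ∧ (Even a' ∨ Odd k) ∧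
      |(a : ℤ) - b| < a' - b' ∧ (a' - b') + |(a : ℤ) - b| < k - 1 := by
  suffices h : ∃ a b a' b' r : ℕ, a + b = n ∧ a' + b' = n ∧ (Even a ∨ Odd k) ∧
      (Even a' ∨ Odd k) ∧ a ≤ b + r ∧ b ≤ a + r ∧ b' + r < a' ∧ a' + r + 1 < b' + k by
    obtain ⟨a, b, a', b', r, hab, hab', hpar, hpar', h₁, h₂, h₃, h₄⟩ := h
    have : |(a : ℤ) - b| ≤ r := abs_le.2 ⟨by omega, by omega⟩
    exact ⟨a, b, a', b', hab, hab', hpar, hpar', by omega, by omega⟩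
  rcases Nat.even_or_odd k with hkeven | hkodd
  · obtain ⟨c, rfl⟩ := hkeven
    obtain ⟨j, hj⟩ : ∃ j, n = 4 * j ∨ n = 4 * j + 1 ∨ n = 4 * j + 2 ∨ n = 4 * j + 3 :=
      ⟨n / 4, by omega⟩
    have heven : ∀ i, Even (2 * i) := even_two_mul
    rcases hj with rfl | rfl | rfl | rfl
    · exact ⟨2 * j, 2 * j, 2 * (j + 1), 2 * j - 2, 0, by omega, by omega, .inl (heven _),
        .inl (heven _), by omega, by omega, by omega, by omega⟩
    · exact ⟨2 * j, 2 * j + 1, 2 * (j + 1), 2 * j - 1, 1, by omega, by omega, .inl (heven _),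
        .inl (heven _), by omega, by omega, by omega, by omega⟩
    · exact ⟨2 * (j + 1), 2 * j, 2 * (j + 2), 2 * j - 2, 2, by omega, by omega, .inl (heven _),
        .inl (heven _), by omega, by omega, by omega, by omega⟩
    · exact ⟨2 * (j + 1), 2 * j + 1, 2 * (j + 2), 2 * j - 1, 1, by omega, by omega,
        .inl (heven _), .inl (heven _), by omega, by omega, by omega, by omega⟩
  · rcases Nat.even_or_odd' n with ⟨j, rfl | rfl⟩
    · exact ⟨j, j, j + 2, j - 2, 0, by omega, by omega, .inr hkodd, .inr hkodd, by omega,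
        by omega, by omega, by omega⟩
    · exact ⟨j + 1, j, j + 2, j - 1, 1, by omega, by omega, .inr hkodd, .inr hkodd, by omega,
        by omega, by omega, by omega⟩

end PartSizes

end OddWheel

/-- For `k = 7` or `k ≥ 9` and `n` large,
`SPEX(n, W_{2k+1}) ∩ EX(n, W_{2k+1}) = ∅`. -/
theorem spex_inter_ex_empty (k : ℕ) (hk : k = 7 ∨ 9 ≤ k) :
    ∃ N : ℕ, ∀ n : ℕ, N ≤ n → ∀ G : SimpleGraph (Fin n),
      ¬ (IsSpexWheel (2 * k + 1) G ∧ IsExWheel (2 * k + 1) G) := by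
  obtain ⟨K, rfl⟩ : ∃ K, k = K + 1 := ⟨k - 1, by omega⟩
  obtain ⟨N, hN⟩ := OddWheel.exists_sq_le_and_mul_sub_le (show 6 ≤ K by omega)
  refine ⟨max N 6, fun n hn G ⟨hspex, hex⟩ => ?_⟩
  obtain ⟨d, hd⟩ := hN n (le_of_max_le_left hn) G hspex hex
  obtain ⟨a, b, a', b', hab, hab', hpar, hpar', hlt, hsum⟩ :=
    OddWheel.exists_two_splits hk (le_of_max_le_right hn)
  push_cast at hsum
  have hpos := abs_nonneg ((a : ℤ) - b)
  have hspectral : |d| ≤ |(a : ℤ) - b| :=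
    sq_le_sq.1 (hd a b hab hpar (by linarith)).1
  have hedges : ((a' : ℤ) - b') * (K - (a' - b')) ≤ d * (K - d) :=
    (hd a' b' hab' hpar' (abs_le.2 ⟨by linarith, by linarith⟩)).2
  have hdle := (le_abs_self d).trans hspectral
  exact hedges.not_gt (OddWheel.mul_sub_lt_mul_sub (by linarith) (by linarith))
end

section
/- Let k ≥ 2 be an integer and ε > 0. For all sufficiently large n (depending on k and ε), if G is an n-vertex W_{2k+1}-free simple graph attaining the maximum spectral radius among all n-vertex W_{2k+1}-free graphs, and V(G) = S ⊔ T is a maximum cut of G, then the number of edges between S and T satisfies e(S,T) ≥ (1/4 − ε)n², and moreover (1/2 − √ε)n ≤ |S| ≤ (1/2 + √ε)n and (1/2 − √ε)n ≤ |T| ≤ (1/2 + √ε)n. -/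
/-!
The square of a top eigenvalue is an eigenvalue of `A²`, so it is at most some row sum of `A²`:
there is a vertex `u` with `λ₁² ≤ ∑ v ∈ N(u), d(v) = 2 e(N(u)) + e(N(u), N(u)ᶜ)`. Since deleting the
hub of an odd wheel leaves a bipartite graph, a large complete bipartite graph inside `N(u)` would
complete to a wheel through `u`; by Kővári–Sós–Turán `e(N(u)) = o(n²)`, while `e(N(u), N(u)ᶜ)` is at
most the maximum cut. Odd wheels are not bipartite, so `λ₁` is at least that of a balanced complete
bipartite graph, `λ₁² ≥ (n² - 1) / 4`, and the maximum cut has at least `(1/4 - o(1)) n²` edges. The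
part sizes then follow from `e(S, T) ≤ |S| |T|`.
-/

open Filter Finset SimpleGraph

section KovariSosTuran

variable {α β V : Type*} [Fintype α] [Fintype β] [Fintype V] {G : SimpleGraph V}
  [DecidableRel G.Adj]

theorem sum_choose_degree_le_of_free (h : (completeBipartiteGraph α β).Free G) :
    ∑ v, (G.degree v).choose (Fintype.card α) ≤
      (Fintype.card V).choose (Fintype.card α) * (Fintype.card β - 1) := by
  classical
  have few_common_neighbors (L : Finset V) (hL : #L = Fintype.card α) :
      #{v | L ⊆ G.neighborFinset v} ≤ Fintype.card β - 1 := by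
    refine Nat.le_sub_one_of_lt (lt_of_not_ge fun hβ ↦ h ?_)
    obtain ⟨R, hR, hRcard⟩ := exists_subset_card_eq hβ
    refine completeBipartiteGraph_isContained_iff.mpr ⟨L, R, hL, hRcard, fun x hx y hy ↦ ?_⟩
    exact ((G.mem_neighborFinset y x).mp ((mem_filter.mp (hR hy)).2 hx)).symm
  calc ∑ v, (G.degree v).choose (Fintype.card α)
      = ∑ v, #{L ∈ powersetCard (Fintype.card α) univ | L ⊆ G.neighborFinset v} :=
        sum_congr rfl fun v _ ↦ by
          rw [← card_neighborFinset_eq_degree, ← card_powersetCard]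
          congr 1
          grind
    _ = ∑ L ∈ powersetCard (Fintype.card α) univ, #{v | L ⊆ G.neighborFinset v} :=
        sum_card_bipartiteAbove_eq_sum_card_bipartiteBelow _
    _ ≤ (Fintype.card V).choose (Fintype.card α) * (Fintype.card β - 1) := by
        rw [← card_univ (α := V), ← card_powersetCard, ← smul_eq_mul]
        exact sum_le_card_nsmul _ _ _ fun L hL ↦ few_common_neighbors L (mem_powersetCard.mp hL).2

theorem kovari_sos_turan [Nonempty α] (h : (completeBipartiteGraph α β).Free G) :
    (∑ v, (G.degree v + 1 - Fintype.card α)) ^ Fintype.card α ≤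
      Fintype.card V ^ (2 * Fintype.card α - 1) * (Fintype.card β - 1) := by
  set s := Fintype.card α
  have hs_pos : 0 < s := Fintype.card_pos
  calc (∑ v, (G.degree v + 1 - s)) ^ s
      ≤ Fintype.card V ^ (s - 1) * ∑ v, (G.degree v + 1 - s) ^ s := by
        obtain ⟨m, hm⟩ := Nat.exists_eq_add_one.mpr hs_pos
        rw [hm]
        exact pow_sum_le_card_mul_sum_pow (fun _ _ ↦ Nat.zero_le _) m
    _ ≤ Fintype.card V ^ (s - 1) * (s.factorial * ∑ v, (G.degree v).choose s) := by
        rw [mul_sum _ _ s.factorial]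
        gcongr with v
        rw [← Nat.descFactorial_eq_factorial_mul_choose]
        exact Nat.pow_sub_le_descFactorial _ _
    _ ≤ Fintype.card V ^ (s - 1) * (s.factorial * ((Fintype.card V).choose s *
          (Fintype.card β - 1))) := by
        gcongr
        exact sum_choose_degree_le_of_free h
    _ ≤ Fintype.card V ^ (s - 1) * (Fintype.card V ^ s * (Fintype.card β - 1)) := by
        rw [← mul_assoc s.factorial, ← Nat.descFactorial_eq_factorial_mul_choose]
        gcongr
        exact Nat.descFactorial_le_pow _ _
    _ = Fintype.card V ^ (2 * s - 1) * (Fintype.card β - 1) := by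
        rw [← mul_assoc, ← pow_add]
        congr 2
        omega

theorem eventually_extremalNumber_completeBipartiteGraph_le (α β : Type*) [Finite α]
    [Finite β] [Nonempty α] {δ : ℝ} (hδ : 0 < δ) :
    ∀ᶠ n : ℕ in atTop, (extremalNumber n (completeBipartiteGraph α β) : ℝ) ≤ δ * n ^ 2 := by
  have := Fintype.ofFinite α
  have := Fintype.ofFinite β
  set s := Fintype.card α
  set t := Fintype.card β
  have hs_pos : 0 < s := Fintype.card_pos
  have eventually_lt_mul {c : ℝ} (hc : 0 < c) (x : ℝ) : ∀ᶠ n : ℕ in atTop, x < c * n :=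
    (tendsto_natCast_atTop_atTop.const_mul_atTop hc).eventually_gt_atTop x
  filter_upwards [eventually_lt_mul hδ s, eventually_lt_mul (pow_pos hδ s) t,
    eventually_gt_atTop 0] with n hsn htn hn
  rw [← Fintype.card_fin n, extremalNumber_le_iff_of_nonneg _ (by positivity), Fintype.card_fin]
  intro G _ hG
  by_contra! hdense
  have sum_large : δ * n ^ 2 ≤ ((∑ v, (G.degree v + 1 - s) : ℕ) : ℝ) := by
    have degree_sum : (2 * #G.edgeFinset : ℝ) ≤ (∑ v, (G.degree v + 1 - s) : ℕ) + n * s := by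
      have : ∑ v, G.degree v ≤ ∑ v, ((G.degree v + 1 - s) + s) :=
        sum_le_sum fun v _ ↦ by omega
      rw [sum_degrees_eq_twice_card_edges, sum_add_distrib, sum_const, card_univ,
        Fintype.card_fin, smul_eq_mul] at this
      exact_mod_cast this
    nlinarith
  have pow_bound : (δ * (n : ℝ) ^ 2) ^ s ≤ n ^ (2 * s - 1) * t := by
    have := (kovari_sos_turan hG).trans (Nat.mul_le_mul_left _ (Nat.sub_le t 1))
    rw [Fintype.card_fin] at this
    exact (pow_le_pow_left₀ (by positivity) sum_large s).trans (by exact_mod_cast this)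
  have pow_split : (δ * (n : ℝ) ^ 2) ^ s = n ^ (2 * s - 1) * (δ ^ s * n) := by
    rw [mul_pow, ← pow_mul, ← Nat.sub_add_cancel (show 1 ≤ 2 * s by omega)]
    simp only [add_tsub_cancel_right]
    ring
  exact htn.not_ge (le_of_mul_le_mul_left (pow_split ▸ pow_bound) (by positivity))

end KovariSosTuran

section Neighborhood

variable {V W : Type*} {G : SimpleGraph V} {F : SimpleGraph W}

theorem isContained_of_completeBipartiteGraph_isContained_between_neighborSet {w : W} {u : V}
    (hF : (F.induce {w}ᶜ).IsBipartite)
    (h : completeBipartiteGraph W W ⊑ G.between (G.neighborSet u) (G.neighborSet u)) :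
    F ⊑ G := by
  classical
  obtain ⟨c⟩ := hF
  obtain ⟨f⟩ := h
  have inl_adj_inr (x y : W) :
      (G.between (G.neighborSet u) (G.neighborSet u)).Adj (f (.inl x)) (f (.inr y)) :=
    f.toHom.map_adj (by simp)
  have adj_left (x : W) : G.Adj u (f (.inl x)) := by
    simpa [between_adj] using (inl_adj_inr x x).2.imp And.left And.left
  have adj_right (x : W) : G.Adj u (f (.inr x)) := by
    simpa [between_adj] using (inl_adj_inr x x).2.imp And.right And.right
  let place (x : W) (hx : x ≠ w) : W ⊕ W := if c ⟨x, hx⟩ = 0 then .inl x else .inr x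
  have adj_place (x : W) (hx : x ≠ w) : G.Adj u (f (place x hx)) := by
    grind
  have place_adj_place {x y : W} (hx : x ≠ w) (hy : y ≠ w) (hxy : F.Adj x y) :
      G.Adj (f (place x hx)) (f (place y hy)) := by
    have : c ⟨x, hx⟩ ≠ c ⟨y, hy⟩ := c.valid hxy
    have := (inl_adj_inr x y).1
    have := (inl_adj_inr y x).1.symm
    grind
  refine ⟨⟨⟨fun x ↦ if hx : x = w then u else f (place x hx), fun {x y} hxy ↦ ?_⟩, ?_⟩⟩
  · have := hxy.ne
    split_ifs with hx hy hy
    · grind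
    · exact adj_place y hy
    · exact (adj_place x hx).symm
    · exact place_adj_place hx hy hxy
  · intro x y hxy
    have f_injective : Function.Injective f := f.injective
    have place_ne (z : W) (hz : z ≠ w) : f (place z hz) ≠ u := (adj_place z hz).ne'
    simp only [RelHom.coeFn_mk] at hxy
    grind

end Neighborhood

section DegreeSums

variable {V : Type*} {G : SimpleGraph V} [DecidableRel G.Adj]

theorem card_interedges_eq_sum (A B : Finset V) :
    #(G.interedges A B) = ∑ v ∈ A, #{w ∈ B | G.Adj v w} := by
  simp only [interedges, Rel.interedges, card_filter, sum_product]

variable [Fintype V] [DecidableEq V]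

theorem two_mul_card_edgeFinset_between_self (A : Finset V) :
    2 * #(G.between A A).edgeFinset = #(G.interedges A A) := by
  rw [two_mul_card_edgeFinset]
  congr 1
  grind [mem_interedges_iff, between_adj]

theorem sum_degree_eq_card_edgeFinset_between_add_card_interedges (A : Finset V) :
    ∑ v ∈ A, G.degree v =
      2 * #(G.between A A).edgeFinset + #(G.interedges A Aᶜ) := by
  rw [two_mul_card_edgeFinset_between_self, card_interedges_eq_sum, card_interedges_eq_sum,
    ← sum_add_distrib]
  refine sum_congr rfl fun v _ ↦ ?_
  rw [← card_union_of_disjoint (disjoint_filter_filter disjoint_compl_right), ← filter_union,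
    union_compl, ← neighborFinset_eq_filter, card_neighborFinset_eq_degree]

end DegreeSums

section Spectrum

variable {V : Type*} [Fintype V] [DecidableEq V]

theorem exists_norm_le_sum_norm_of_hasEigenvalue {𝕜 : Type*} [NormedField 𝕜]
    {A : Matrix V V 𝕜} {μ : 𝕜} (hμ : Module.End.HasEigenvalue (Matrix.toLin' A) μ) :
    ∃ i, ‖μ‖ ≤ ∑ j, ‖A i j‖ := by
  obtain ⟨i, hi⟩ := eigenvalue_mem_ball hμ
  refine ⟨i, ?_⟩
  rw [mem_closedBall_iff_norm] at hi
  rw [← add_sum_erase _ _ (mem_univ i)]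
  linarith [norm_le_norm_add_norm_sub' μ (A i i)]

theorem exists_hasEigenvalue_of_isHermitian [Nonempty V] {A : Matrix V V ℝ} (hA : A.IsHermitian) :
    ∃ μ, Module.End.HasEigenvalue (Matrix.toLin' A) μ := by
  refine ⟨hA.eigenvalues (Classical.arbitrary V), Module.End.HasEigenvalue.of_mem_spectrum ?_⟩
  rw [Matrix.spectrum_toLin', hA.spectrum_real_eq_range_eigenvalues]
  exact Set.mem_range_self _

theorem exists_sq_le_sum_degree_of_hasEigenvalue {G : SimpleGraph V} [DecidableRel G.Adj] {μ : ℝ}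
    (hμ : Module.End.HasEigenvalue (Matrix.toLin' (G.adjMatrix ℝ)) μ) :
    ∃ u, μ ^ 2 ≤ ∑ v ∈ G.neighborFinset u, (G.degree v : ℝ) := by
  have hμ_sq : Module.End.HasEigenvalue (Matrix.toLin' (G.adjMatrix ℝ ^ 2)) (μ ^ 2) := by
    simpa only [Matrix.toLin'_pow] using hμ.pow 2
  obtain ⟨u, hu⟩ := exists_norm_le_sum_norm_of_hasEigenvalue hμ_sq
  refine ⟨u, ?_⟩
  calc μ ^ 2 ≤ ∑ w, ‖(G.adjMatrix ℝ ^ 2) u w‖ := by simpa using hu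
    _ = ∑ w, ∑ v ∈ G.neighborFinset u, G.adjMatrix ℝ v w := by
        refine sum_congr rfl fun w _ ↦ ?_
        rw [sq, adjMatrix_mul_apply, Real.norm_of_nonneg]
        exact sum_nonneg fun v _ ↦ by simp only [adjMatrix_apply]; positivity
    _ = ∑ v ∈ G.neighborFinset u, (G.degree v : ℝ) := by
        rw [sum_comm]
        refine sum_congr rfl fun v _ ↦ ?_
        simp [adjMatrix_apply, ← card_neighborFinset_eq_degree, neighborFinset_eq_filter]

theorem hasEigenvalue_adjMatrix_between_top {S T : Finset V} (hST : Disjoint S T)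
    (hS : S.Nonempty) (hT : T.Nonempty) {μ : ℝ} (hμ : μ ^ 2 = #S * #T) :
    Module.End.HasEigenvalue
      (Matrix.toLin' (((⊤ : SimpleGraph V).between S T).adjMatrix ℝ)) μ := by
  let x (v : V) : ℝ := if v ∈ S then μ else if v ∈ T then #S else 0
  have x_of_mem_right {v : V} (hv : v ∈ T) : x v = #S := by
    simp only [x, Finset.disjoint_right.mp hST hv, hv, if_true, if_false]
  refine Module.End.hasEigenvalue_of_hasEigenvector (x := x)
    ⟨Module.End.mem_eigenspace_iff.mpr (funext fun v ↦ ?_), fun hx ↦ ?_⟩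
  · have neighborFinset_eq : ((⊤ : SimpleGraph V).between S T).neighborFinset v =
        if v ∈ S then T else if v ∈ T then S else ∅ := by
      ext w
      rw [mem_neighborFinset, between_adj]
      grind [top_adj, Finset.disjoint_left]
    have sum_left : ∑ w ∈ S, x w = #S * μ := by
      rw [sum_congr rfl fun w hw ↦ if_pos hw, sum_const, nsmul_eq_mul]
    have sum_right : ∑ w ∈ T, x w = #T * #S := by
      rw [sum_congr rfl fun w hw ↦ x_of_mem_right hw, sum_const, nsmul_eq_mul]
    rw [Matrix.toLin'_apply, adjMatrix_mulVec_apply, neighborFinset_eq, Pi.smul_apply, smul_eq_mul]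
    split_ifs with hvS hvT
    · rw [sum_right, show x v = μ from if_pos hvS]
      linarith
    · rw [sum_left, x_of_mem_right hvT, mul_comm]
    · rw [sum_empty, show x v = 0 by simp only [x, hvS, hvT, if_false], mul_zero]
  · obtain ⟨v, hv⟩ := hT
    have x_eq_zero : x v = 0 := congrFun hx v
    rw [x_of_mem_right hv] at x_eq_zero
    exact hS.card_ne_zero (mod_cast x_eq_zero)

end Spectrum

section SpectralExtremal

variable {n : ℕ}

theorem isGreatest_lam1 [NeZero n] (G : SimpleGraph (Fin n)) [DecidableRel G.Adj] :
    IsGreatest {μ | Module.End.HasEigenvalue (Matrix.toLin' (G.adjMatrix ℝ)) μ} (lam1 G) := by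
  have lam1_eq :
      lam1 G = sSup {μ | Module.End.HasEigenvalue (Matrix.toLin' (G.adjMatrix ℝ)) μ} := by
    unfold lam1
    congr!
  have finite_eigenvalues := Module.End.finite_hasEigenvalue (Matrix.toLin' (G.adjMatrix ℝ))
  rw [lam1_eq]
  have nonempty_eigenvalues := exists_hasEigenvalue_of_isHermitian (G.isSymm_adjMatrix (α := ℝ))
  exact ⟨Set.Nonempty.csSup_mem nonempty_eigenvalues finite_eigenvalues,
    fun μ hμ ↦ le_csSup finite_eigenvalues.bddAbove hμ⟩

theorem sqrt_card_mul_card_le_lam1_between_top {S T : Finset (Fin n)} (hST : Disjoint S T)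
    (hS : S.Nonempty) (hT : T.Nonempty) :
    √(#S * #T) ≤ lam1 ((⊤ : SimpleGraph (Fin n)).between S T) := by
  have : NeZero n := ⟨fun h ↦ by subst h; exact hS.ne_empty (Subsingleton.elim _ _)⟩
  exact (isGreatest_lam1 _).2
    (hasEigenvalue_adjMatrix_between_top hST hS hT (Real.sq_sqrt (by positivity)))

theorem card_mul_card_le_lam1_sq {G : SimpleGraph (Fin n)}
    (hG : ∀ H : SimpleGraph (Fin n), H.IsBipartite → lam1 H ≤ lam1 G)
    {S T : Finset (Fin n)} (hST : Disjoint S T) : (#S * #T : ℝ) ≤ lam1 G ^ 2 := by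
  obtain rfl | hS := S.eq_empty_or_nonempty
  · simpa using sq_nonneg (lam1 G)
  obtain rfl | hT := T.eq_empty_or_nonempty
  · simpa using sq_nonneg (lam1 G)
  have sqrt_le_lam1 : √(#S * #T) ≤ lam1 G :=
    (sqrt_card_mul_card_le_lam1_between_top hST hS hT).trans
      (hG _ (between_isBipartite (mod_cast hST)))
  exact (Real.sqrt_le_iff.mp sqrt_le_lam1).2

theorem sq_sub_one_div_four_le_lam1_sq {G : SimpleGraph (Fin n)}
    (hG : ∀ H : SimpleGraph (Fin n), H.IsBipartite → lam1 H ≤ lam1 G) :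
    ((n : ℝ) ^ 2 - 1) / 4 ≤ lam1 G ^ 2 := by
  obtain ⟨S, -, hS⟩ := exists_subset_card_eq (s := (univ : Finset (Fin n))) (n := n / 2)
    (by rw [card_univ, Fintype.card_fin]; exact Nat.div_le_self n 2)
  have hS_compl : #Sᶜ = (n + 1) / 2 := by
    rw [card_compl, Fintype.card_fin]
    omega
  refine le_trans ?_ (card_mul_card_le_lam1_sq hG (disjoint_compl_right (a := S)))
  rw [hS, hS_compl]
  have halves : (2 * (n / 2 : ℕ) : ℝ) = n ∧ (2 * ((n + 1) / 2 : ℕ) : ℝ) = n ∨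
      (2 * (n / 2 : ℕ) : ℝ) + 1 = n ∧ (2 * ((n + 1) / 2 : ℕ) : ℝ) = n + 1 := by
    norm_cast
    omega
  rcases halves with ⟨h₁, h₂⟩ | ⟨h₁, h₂⟩ <;> nlinarith

theorem eventually_le_lam1_sq {δ : ℝ} (hδ : 0 < δ) :
    ∀ᶠ n : ℕ in atTop, ∀ G : SimpleGraph (Fin n),
      (∀ H : SimpleGraph (Fin n), H.IsBipartite → lam1 H ≤ lam1 G) →
        (1 / 4 - δ) * (n : ℝ) ^ 2 ≤ lam1 G ^ 2 := by
  have := (tendsto_natCast_atTop_atTop (R := ℝ)).const_mul_atTop hδ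
  filter_upwards [this.eventually_ge_atTop 1, eventually_ge_atTop 1] with n hδn hn G hG
  have : (1 : ℝ) ≤ n := mod_cast hn
  linarith [sq_sub_one_div_four_le_lam1_sq hG, show 1 ≤ δ * (n : ℝ) ^ 2 by nlinarith]

end SpectralExtremal

section MaxCut

variable {n : ℕ} {G : SimpleGraph (Fin n)} {S T : Finset (Fin n)}

theorem cutCount_eq_card_interedges [DecidableRel G.Adj] (S : Finset (Fin n)) :
    cutCount G S = #(G.interedges S Sᶜ) := by
  unfold cutCount
  congr 1
  ext p
  simp only [mem_filter_univ, mem_interedges_iff, mem_compl]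
  tauto

theorem cutCount_le_card_mul_sub (G : SimpleGraph (Fin n)) (S : Finset (Fin n)) :
    (cutCount G S : ℝ) ≤ #S * (n - #S) := by
  classical
  have := G.card_interedges_le_mul S Sᶜ
  rw [← cutCount_eq_card_interedges, card_compl, Fintype.card_fin] at this
  rw [← Nat.cast_sub (card_finset_fin_le S)]
  exact_mod_cast this

theorem lam1_sq_le_add_cutCount [NeZero n] {W : Type*} [Finite W] {F : SimpleGraph W} {w : W}
    (hF : (F.induce {w}ᶜ).IsBipartite) (hG : F.Free G) (hST : IsMaxCut G S T) :
    lam1 G ^ 2 ≤ 2 * extremalNumber n (completeBipartiteGraph W W) + cutCount G S := by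
  classical
  have := Fintype.ofFinite W
  obtain ⟨u, hu⟩ := exists_sq_le_sum_degree_of_hasEigenvalue (isGreatest_lam1 G).1
  have edges_within :
      #(G.between (G.neighborFinset u) (G.neighborFinset u)).edgeFinset ≤
        extremalNumber n (completeBipartiteGraph W W) := by
    refine (card_edgeFinset_le_extremalNumber fun h ↦ hG ?_).trans_eq (by rw [Fintype.card_fin])
    rw [coe_neighborFinset] at h
    exact isContained_of_completeBipartiteGraph_isContained_between_neighborSet hF h
  have degree_sum := sum_degree_eq_card_edgeFinset_between_add_card_interedges (G := G)
    (G.neighborFinset u)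
  rw [← cutCount_eq_card_interedges] at degree_sum
  have cut_le := hST.2 (G.neighborFinset u)
  refine hu.trans ?_
  norm_cast
  omega

theorem abs_card_sub_half_le_of_le_cutCount {ε : ℝ}
    (h : (1 / 4 - ε) * (n : ℝ) ^ 2 ≤ cutCount G S) : |(#S : ℝ) - n / 2| ≤ √ε * n := by
  rw [← Real.sqrt_sq (Nat.cast_nonneg (α := ℝ) n), ← Real.sqrt_mul' _ (sq_nonneg _)]
  refine Real.abs_le_sqrt ?_
  rw [Real.sqrt_sq (Nat.cast_nonneg n)]
  linarith [cutCount_le_card_mul_sub G S]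

theorem balanced_of_isMaxCut_of_le_cutCount {ε : ℝ} (hST : IsMaxCut G S T)
    (h : (1 / 4 - ε) * (n : ℝ) ^ 2 ≤ cutCount G S) :
    (1 / 2 - √ε) * n ≤ #S ∧ #S ≤ (1 / 2 + √ε) * n ∧
      (1 / 2 - √ε) * n ≤ #T ∧ #T ≤ (1 / 2 + √ε) * n := by
  have card_T : (#T : ℝ) = n - #S := by
    rw [hST.1, card_compl, Fintype.card_fin, Nat.cast_sub (card_finset_fin_le S)]
  obtain ⟨h₁, h₂⟩ := abs_le.mp (abs_card_sub_half_le_of_le_cutCount h)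
  refine ⟨?_, ?_, ?_, ?_⟩ <;> linarith

theorem maxcut_large_general {W : Type*} [Finite W] {F : SimpleGraph W} {w : W}
    (hF : (F.induce {w}ᶜ).IsBipartite) {ε : ℝ} (hε : 0 < ε) :
    ∃ N : ℕ, ∀ n : ℕ, N ≤ n → ∀ G : SimpleGraph (Fin n), F.Free G →
      (∀ H : SimpleGraph (Fin n), H.IsBipartite → lam1 H ≤ lam1 G) →
      ∀ S T : Finset (Fin n), IsMaxCut G S T →
        (1 / 4 - ε) * (n : ℝ) ^ 2 ≤ cutCount G S ∧
        (1 / 2 - √ε) * n ≤ #S ∧ #S ≤ (1 / 2 + √ε) * n ∧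
        (1 / 2 - √ε) * n ≤ #T ∧ #T ≤ (1 / 2 + √ε) * n := by
  have : Nonempty W := ⟨w⟩
  refine eventually_atTop.mp ?_
  filter_upwards [eventually_gt_atTop 0, eventually_le_lam1_sq (half_pos hε),
    eventually_extremalNumber_completeBipartiteGraph_le W W (div_pos hε four_pos)]
    with n hn large_lam1 few_edges G hG hlam S T hST
  have : NeZero n := ⟨hn.ne'⟩
  have large_cut : (1 / 4 - ε) * (n : ℝ) ^ 2 ≤ cutCount G S := by
    linarith [lam1_sq_le_add_cutCount hF hG hST, large_lam1 G hlam]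
  exact ⟨large_cut, balanced_of_isMaxCut_of_le_cutCount hST large_cut⟩

end MaxCut

section Wheel

theorem wheelFree_iff_free {t n : ℕ} {G : SimpleGraph (Fin n)} :
    WheelFree t G ↔ (wheelGraph t).Free G :=
  not_congr ⟨fun ⟨f, hf⟩ ↦ ⟨⟨⟨f, hf _ _⟩, f.injective⟩⟩,
    fun ⟨f⟩ ↦ ⟨f.toEmbedding, fun _ _ h ↦ f.toHom.map_adj h⟩⟩

theorem isBipartite_induce_compl_hub_wheelGraph (k : ℕ) :
    ((wheelGraph (2 * k + 1)).induce {0}ᶜ).IsBipartite := by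
  refine ⟨Coloring.mk (fun v ↦ if Even v.1.val then 0 else 1) fun {v w} hvw ↦ ?_⟩
  have hv : v.1.val ≠ 0 := Fin.val_ne_zero_iff.mpr v.2
  have hw : w.1.val ≠ 0 := Fin.val_ne_zero_iff.mpr w.2
  have parity_ne : ¬(Even v.1.val ↔ Even w.1.val) := by
    simp only [comap_adj, wheelGraph, Function.Embedding.subtype_apply] at hvw
    grind
  grind

theorem not_isBipartite_wheelGraph {t : ℕ} (ht : 3 ≤ t) : ¬(wheelGraph t).IsBipartite := by
  intro h
  refine h.cliqueFree (by norm_num : 2 < 3)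
    {⟨0, by omega⟩, ⟨1, by omega⟩, ⟨2, by omega⟩} (is3Clique_triple_iff.mpr ?_)
  simp [wheelGraph]

theorem wheelFree_of_isBipartite {t n : ℕ} (ht : 3 ≤ t) {G : SimpleGraph (Fin n)}
    (hG : G.IsBipartite) : WheelFree t G :=
  wheelFree_iff_free.mpr fun ⟨f⟩ ↦ not_isBipartite_wheelGraph ht (hG.of_hom f.toHom)

end Wheel

/-- A maximum cut of a spectral extremal `W_{2k+1}`-free graph has at
least `(1/4 - ε)n²` crossing edges and both parts have size `(1/2 ± √ε)n`. -/
theorem maxcut_large (k : ℕ) (hk : 2 ≤ k) (ε : ℝ) (hε : 0 < ε) :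
    ∃ N : ℕ, ∀ n : ℕ, N ≤ n → ∀ G : SimpleGraph (Fin n), IsSpexWheel (2 * k + 1) G →
      ∀ S T : Finset (Fin n), IsMaxCut G S T →
        (1 / 4 - ε) * (n : ℝ) ^ 2 ≤ (cutCount G S : ℝ) ∧
        (1 / 2 - Real.sqrt ε) * (n : ℝ) ≤ (S.card : ℝ) ∧
        (S.card : ℝ) ≤ (1 / 2 + Real.sqrt ε) * (n : ℝ) ∧
        (1 / 2 - Real.sqrt ε) * (n : ℝ) ≤ (T.card : ℝ) ∧
        (T.card : ℝ) ≤ (1 / 2 + Real.sqrt ε) * (n : ℝ) := by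
  obtain ⟨N, hN⟩ := maxcut_large_general (isBipartite_induce_compl_hub_wheelGraph k) hε
  exact ⟨N, fun n hn G hG ↦ hN n hn G (wheelFree_iff_free.mp hG.1) fun H hH ↦
    hG.2 H (wheelFree_of_isBipartite (by omega) hH)⟩
end
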